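/- For every N ∈ ℕ there exist a constant C > 0 and an integer N' ∈ ℕ such that ‖ψ_j Op^t_ℏ(a) (ψ_k u)‖_{L²(ℝⁿ)} ≤ C |a|_{S^0_f, N'} ⟨j - k⟩^{-N} ‖u‖_{L²(ℝⁿ)} for all t ∈ [0,1], all ℏ ∈ (0,1], all j, k ∈ ℤ, all a ∈ S^0_f(ℝ^{2n}) and all u ∈ C_c^∞(ℝⁿ). Here ⟨j-k⟩ := (1 + (j-k)²)^{1/2}. -/

import Mathlib

open MeasureTheory Finset

noncomputable section

/-- Points of `ℝⁿ` (with `n = d + 1`) split as `q = (r, θ) ∈ ℝ × ℝ^d`. -/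
abbrev Q (d : ℕ) : Type := ℝ × (Fin d → ℝ)

/-- The coordinate direction `∂_r`. -/
def eR (d : ℕ) : Q d := ((1 : ℝ), 0)

/-- The coordinate direction `∂_{θ_i}`. -/
def eTh (d : ℕ) (i : Fin d) : Q d := ((0 : ℝ), Pi.single i 1)

/-- Directional derivative of a complex-valued function. -/
def dirD {E : Type*} [NormedAddCommGroup E] [NormedSpace ℝ E]
    (v : E) (g : E → ℂ) : E → ℂ :=
  fun x => fderiv ℝ g x v

/-- Multiindices `α = (α₀, α')` split as in the paper. -/
abbrev MIdx (d : ℕ) : Type := ℕ × (Fin d → ℕ)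

/-- `|α| = α₀ + |α'|`. -/
def deg {d : ℕ} (α : MIdx d) : ℕ := α.1 + ∑ i, α.2 i

/-- `|α'|`, the angular part of a multiindex. -/
def degA {d : ℕ} (α : MIdx d) : ℕ := ∑ i, α.2 i

/-- `∂_q^α` acting on functions on `ℝⁿ = ℝ × ℝ^d`. -/
def mderiv1 {d : ℕ} (α : MIdx d) (g : Q d → ℂ) : Q d → ℂ :=
  (dirD (eR d))^[α.1] <|
    (List.finRange d).foldr (fun i h => (dirD (eTh d i))^[α.2 i] h) g

/-- `∂_q^α ∂_p^β` acting on functions on phase space. -/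
def mderiv2 {d : ℕ} (α β : MIdx d) (g : Q d × Q d → ℂ) : Q d × Q d → ℂ :=
  (dirD ((eR d, 0) : Q d × Q d))^[α.1] <|
  (List.finRange d).foldr (fun i h => (dirD ((eTh d i, 0) : Q d × Q d))^[α.2 i] h) <|
  (dirD (((0 : Q d), eR d) : Q d × Q d))^[β.1] <|
  (List.finRange d).foldr (fun i h => (dirD (((0 : Q d), eTh d i) : Q d × Q d))^[β.2 i] h) g

/-- `∂_q^α ∂_p^β ∂_{q'}^γ` acting on amplitudes `a(q, p, q')`. -/
def mderiv3 {d : ℕ} (α β γ : MIdx d) (g : Q d × Q d × Q d → ℂ) : Q d × Q d × Q d → ℂ :=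
  (dirD ((eR d, 0, 0) : Q d × Q d × Q d))^[α.1] <|
  (List.finRange d).foldr (fun i h => (dirD ((eTh d i, 0, 0) : Q d × Q d × Q d))^[α.2 i] h) <|
  (dirD (((0 : Q d), eR d, 0) : Q d × Q d × Q d))^[β.1] <|
  (List.finRange d).foldr (fun i h => (dirD (((0 : Q d), eTh d i, 0) : Q d × Q d × Q d))^[β.2 i] h) <|
  (dirD (((0 : Q d), (0 : Q d), eR d) : Q d × Q d × Q d))^[γ.1] <|
  (List.finRange d).foldr (fun i h => (dirD (((0 : Q d), (0 : Q d), eTh d i) : Q d × Q d × Q d))^[γ.2 i] h) g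

/-- `⟨p⟩ = (1 + ρ² + |η|²)^{1/2}`. -/
def brP {d : ℕ} (p : Q d) : ℝ := Real.sqrt (1 + p.1 ^ 2 + ∑ i, (p.2 i) ^ 2)

/-- `⟨ρ ⊕ f(r)⁻¹ η⟩` evaluated at a phase-space point. -/
def brF {d : ℕ} (f : ℝ → ℝ) (x : Q d × Q d) : ℝ :=
  Real.sqrt (1 + x.2.1 ^ 2 + ∑ i, (x.2.2 i / f x.1.1) ^ 2)

/-- The standing assumption on `f : ℝ → [1, ∞)`: smooth, `f ≥ 1`, and all derivatives
of `log f` of order `≥ 1` are bounded. -/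
def GoodF (f : ℝ → ℝ) : Prop :=
  ContDiff ℝ (⊤ : ℕ∞) f ∧ (∀ r, 1 ≤ f r) ∧
    ∀ j : ℕ, 1 ≤ j → ∃ C : ℝ, ∀ r, |iteratedDeriv j (fun s => Real.log (f s)) r| ≤ C

/-- Membership in the symbol class `S^m_f(ℝ^{2n})`. -/
def IsSymbol {d : ℕ} (f : ℝ → ℝ) (m : ℝ) (a : Q d × Q d → ℂ) : Prop :=
  ContDiff ℝ (⊤ : ℕ∞) a ∧
    ∀ α β : MIdx d, ∃ C : ℝ, ∀ x : Q d × Q d,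
      ‖mderiv2 α β a x‖ ≤ C * f x.1.1 ^ ((degA α : ℝ) - (degA β : ℝ)) * brF f x ^ (m - (deg β : ℝ))

/-- The finite set of multiindices of length `≤ N`. -/
def idxSet (d N : ℕ) : Finset (MIdx d) :=
  ((Finset.range (N + 1)) ×ˢ Fintype.piFinset fun _ : Fin d => Finset.range (N + 1)).filter
    fun α => deg α ≤ N

/-- The seminorm `|a|_{S^m_f, N}`. -/
def symNorm {d : ℕ} (f : ℝ → ℝ) (m : ℝ) (N : ℕ) (a : Q d × Q d → ℂ) : ℝ :=
  ∑ α ∈ idxSet d N, ∑ β ∈ idxSet d N,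
    if deg α + deg β ≤ N then
      ⨆ x : Q d × Q d,
        f x.1.1 ^ (-(degA α : ℝ) + (degA β : ℝ)) * brF f x ^ (-m + (deg β : ℝ)) *
          ‖mderiv2 α β a x‖
    else 0

/-- `p · q`. -/
def qdot {d : ℕ} (p q : Q d) : ℝ := p.1 * q.1 + ∑ i, p.2 i * q.2 i

/-- The oscillating factor `e^{i p · v / ℏ}`. -/
def ephase {d : ℕ} (ℏ : ℝ) (p v : Q d) : ℂ :=
  Complex.exp (Complex.I * Complex.ofReal (qdot p v) / Complex.ofReal ℏ)

/-- The quantization `Op^t_ℏ(a)` of a symbol, acting on functions (trivialized half-densities). -/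
def Op {d : ℕ} (ℏ t : ℝ) (a : Q d × Q d → ℂ) (u : Q d → ℂ) : Q d → ℂ :=
  fun q => ((2 * Real.pi * ℏ) ^ (d + 1) : ℝ)⁻¹ •
    ∫ p : Q d, ∫ q' : Q d,
      a (t • q + (1 - t) • q', p) * ephase ℏ p (q - q') * u q'

/-- Membership in `C_c^∞(ℝⁿ)`. -/
def IsCc {d : ℕ} (u : Q d → ℂ) : Prop := ContDiff ℝ (⊤ : ℕ∞) u ∧ HasCompactSupport u

/-- The `L²` inner product `⟨w, v⟩ = ∫ w \bar v`. -/
def l2inner {d : ℕ} (w v : Q d → ℂ) : ℂ := ∫ q : Q d, w q * (starRingEnd ℂ) (v q)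

/-- The `L²` norm. -/
def l2norm {d : ℕ} (u : Q d → ℂ) : ℝ := (∫ q : Q d, ‖u q‖ ^ 2) ^ (1 / 2 : ℝ)

/-- `Σ_{|β| ≤ N} sup |∂^β u|`. -/
def ckNorm {d : ℕ} (N : ℕ) (u : Q d → ℂ) : ℝ :=
  ∑ β ∈ idxSet d N, ⨆ q : Q d, ‖mderiv1 β u q‖

/-- `⟨ρ ⊕ f(tr + (1-t)r')⁻¹ η⟩` evaluated at a point `(q, p, q')`. -/
def brFA {d : ℕ} (f : ℝ → ℝ) (t : ℝ) (x : Q d × Q d × Q d) : ℝ :=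
  Real.sqrt (1 + x.2.1.1 ^ 2 + ∑ i, (x.2.1.2 i / f (t * x.1.1 + (1 - t) * x.2.2.1)) ^ 2)

/-- Membership in the amplitude class `BS^m_{f,t}(ℝ^{3n})`. -/
def IsAmp {d : ℕ} (f : ℝ → ℝ) (m t : ℝ) (a : Q d × Q d × Q d → ℂ) : Prop :=
  ContDiff ℝ (⊤ : ℕ∞) a ∧
    ∀ α β γ : MIdx d, ∃ C : ℝ, ∀ x : Q d × Q d × Q d,
      ‖mderiv3 α β γ a x‖ ≤
        C * f (t * x.1.1 + (1 - t) * x.2.2.1) ^ ((degA α : ℝ) - (degA β : ℝ) + (degA γ : ℝ)) *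
          brFA f t x ^ (m - (deg β : ℝ))

/-- The seminorm `|a|_{BS^m_{f,t}, N}`. -/
def ampNorm {d : ℕ} (f : ℝ → ℝ) (m t : ℝ) (N : ℕ) (a : Q d × Q d × Q d → ℂ) : ℝ :=
  ∑ α ∈ idxSet d N, ∑ β ∈ idxSet d N, ∑ γ ∈ idxSet d N,
    if deg α + deg β + deg γ ≤ N then
      ⨆ x : Q d × Q d × Q d,
        f (t * x.1.1 + (1 - t) * x.2.2.1) ^ (-(degA α : ℝ) + (degA β : ℝ) - (degA γ : ℝ)) *
          brFA f t x ^ (-m + (deg β : ℝ)) * ‖mderiv3 α β γ a x‖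
    else 0

/-- The quantization of an amplitude `a(q, p, q')`. -/
def OpAmp {d : ℕ} (ℏ : ℝ) (a : Q d × Q d × Q d → ℂ) (u : Q d → ℂ) : Q d → ℂ :=
  fun q => ((2 * Real.pi * ℏ) ^ (d + 1) : ℝ)⁻¹ •
    ∫ p : Q d, ∫ q' : Q d, a (q, p, q') * ephase ℏ p (q - q') * u q'


/-! ### Derivative bounds -/

section Bd

variable {E G : Type*} [NormedAddCommGroup E] [NormedSpace ℝ E]
  [NormedAddCommGroup G] [NormedSpace ℝ G]

/-- all derivatives up to order `n` are bounded by `S`. -/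
def Bd (n : ℕ) (b : E → ℂ) (S : ℝ) : Prop :=
  ∀ i ≤ n, ∀ z, ‖iteratedFDeriv ℝ i b z‖ ≤ S

/-- smooth -/
abbrev Sm (b : E → ℂ) : Prop := ContDiff ℝ (⊤ : ℕ∞) b

theorem Bd.nonneg {n : ℕ} {b : E → ℂ} {S : ℝ} (h : Bd n b S) : 0 ≤ S :=
  (norm_nonneg _).trans (h 0 (Nat.zero_le _) 0)

theorem Bd.mono {n m : ℕ} {b : E → ℂ} {S : ℝ} (h : Bd n b S) (hm : m ≤ n) : Bd m b S :=
  fun i hi z => h i (hi.trans hm) z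

theorem Bd.mul {n : ℕ} {f g : E → ℂ} {A B : ℝ} (hfs : Sm f) (hgs : Sm g)
    (hf : Bd n f A) (hg : Bd n g B) : Bd n (fun x => f x * g x) (2 ^ n * A * B) := by
  intro i hi z
  have hA := hf.nonneg
  have hB := hg.nonneg
  refine (norm_iteratedFDeriv_mul_le hfs hgs z (n := i) (by exact_mod_cast le_top)).trans ?_
  calc _ ≤ ∑ k ∈ Finset.range (i + 1), (i.choose k : ℝ) * A * B := by
        apply Finset.sum_le_sum
        intro k hk
        have hk' : k ≤ i := by simpa [Nat.lt_succ_iff] using hk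
        gcongr
        · exact hf k (hk'.trans hi) z
        · exact hg (i - k) ((Nat.sub_le _ _).trans hi) z
    _ = 2 ^ i * A * B := by
        rw [← Finset.sum_mul, ← Finset.sum_mul]
        congr 2
        exact_mod_cast Nat.sum_range_choose i
    _ ≤ _ := by
        gcongr
        norm_num

theorem Bd.comp_linear {n : ℕ} {f : E → ℂ} {A : ℝ} (hfs : Sm f) (hf : Bd n f A)
    (L : G →L[ℝ] E) (hL : ‖L‖ ≤ 1) : Bd n (fun x => f (L x)) A := by
  intro i hi z
  have := L.iteratedFDeriv_comp_right hfs z (i := i) (by exact_mod_cast le_top)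
  change ‖iteratedFDeriv ℝ i (f ∘ L) z‖ ≤ A
  rw [this]
  refine (ContinuousMultilinearMap.norm_compContinuousLinearMap_le _ _).trans ?_
  have h1 : ∏ _j : Fin i, ‖L‖ ≤ 1 := Finset.prod_le_one (fun _ _ => norm_nonneg _) (fun _ _ => hL)
  calc _ ≤ ‖iteratedFDeriv ℝ i f (L z)‖ * 1 := by gcongr
    _ ≤ A := by simpa using hf i hi _

theorem Bd.translate {n : ℕ} {f : E → ℂ} {A : ℝ} (hf : Bd n f A) (c : E) :
    Bd n (fun x => f (x + c)) A := by
  intro i hi z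
  rw [iteratedFDeriv_comp_add_right]
  exact hf i hi _

theorem Bd.fder {n : ℕ} {f : E → ℂ} {A : ℝ} (hfs : Sm f) (hf : Bd (n + 1) f A) (v : E)
    (hv : ‖v‖ ≤ 1) : Bd n (fun x => fderiv ℝ f x v) A := by
  intro i hi z
  have h1 : ContDiffAt ℝ (i : ℕ) (fderiv ℝ f) z :=
    (hfs.fderiv_right (m := (i : ℕ)) (by norm_cast; exact le_top)).contDiffAt
  refine (norm_iteratedFDeriv_clm_apply_const (f := fderiv ℝ f) (c := v) h1 le_rfl).trans ?_
  rw [norm_iteratedFDeriv_fderiv]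
  calc _ ≤ 1 * ‖iteratedFDeriv ℝ (i + 1) f z‖ := by gcongr
    _ ≤ A := by simpa using hf (i + 1) (by omega) z

theorem Bd.exists_of_compact {f : E → ℂ} (hfs : Sm f) (hc : HasCompactSupport f) (n : ℕ) :
    ∃ A, 0 < A ∧ Bd n f A := by
  have h : ∀ i : ℕ, ∃ C, ∀ z, ‖iteratedFDeriv ℝ i f z‖ ≤ C := fun i =>
    (hc.iteratedFDeriv i).exists_bound_of_continuous
      (hfs.continuous_iteratedFDeriv (by exact_mod_cast le_top))
  choose C hC using h
  refine ⟨1 + ∑ i ∈ Finset.range (n + 1), |C i|, by positivity, fun i hi z => ?_⟩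
  have h2 : |C i| ≤ ∑ i ∈ Finset.range (n + 1), |C i| :=
    Finset.single_le_sum (f := fun i => |C i|) (fun _ _ => abs_nonneg _) (by simp; omega)
  have := hC i z
  have := le_abs_self (C i)
  linarith

end Bd

/-! ### Fourier decay -/

section Four
variable (V : Type*) [NormedAddCommGroup V] [InnerProductSpace ℝ V] [FiniteDimensional ℝ V]
  [MeasurableSpace V] [BorelSpace V]

open FourierTransform Module

/-- the weight -/
def hW {V : Type*} [NormedAddCommGroup V] [InnerProductSpace ℝ V] (σ : V) : ℝ :=
  (1 + ‖σ‖) ^ (-((finrank ℝ V + 1 : ℕ) : ℝ))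

theorem hW_pos {V : Type*} [NormedAddCommGroup V] [InnerProductSpace ℝ V] (σ : V) : 0 < hW σ := by
  unfold hW; positivity

theorem hW_integrable : Integrable (fun σ : V => hW σ) := by
  unfold hW
  exact integrable_one_add_norm (by push_cast; linarith)

theorem hW_ge {V : Type*} [NormedAddCommGroup V] [InnerProductSpace ℝ V] (σ : V) {x K : ℝ}
    (hx : 0 ≤ x) (h0 : x ≤ K) (h1 : ‖σ‖ ^ (finrank ℝ V + 1) * x ≤ K) :
    x ≤ 2 ^ (finrank ℝ V + 2) * K * hW σ := by
  unfold hW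
  rw [Real.rpow_neg (by positivity), Real.rpow_natCast, ← div_eq_mul_inv, le_div_iff₀ (by positivity)]
  set n := finrank ℝ V + 1
  have hb : (1 + ‖σ‖)^n ≤ 2 ^ (n-1) * (1 ^ n + ‖σ‖^n) := add_pow_le (by norm_num) (norm_nonneg _) n
  have h2 : (2:ℝ)^(n-1) ≤ 2 ^ n := by gcongr <;> norm_num
  calc x * (1 + ‖σ‖)^n ≤ x * (2 ^ n * (1 ^ n + ‖σ‖^n)) := by
        gcongr; exact hb.trans (by gcongr)
    _ = 2 ^ n * (x + ‖σ‖^n * x) := by ring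
    _ ≤ 2 ^ n * (K + K) := by gcongr
    _ = _ := by simp only [n]; ring

theorem fourier_decay : ∃ C > 0, ∀ (c : V → ℂ) (m0 : V) (S : ℝ), Sm c →
    (tsupport c ⊆ Metric.closedBall m0 2) → Bd (finrank ℝ V + 1) c S →
    ∀ σ, ‖𝓕 c σ‖ ≤ C * S * hW σ := by
  set n := finrank ℝ V + 1 with hn
  set vol : ℝ := (volume (Metric.closedBall (0 : V) 2)).toReal with hvol
  refine ⟨2 ^ (finrank ℝ V + 2) * (2 ^ n * ((n + 1) * (vol + 1))), by positivity, ?_⟩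
  intro c m0 S hc hsupp hB σ
  have hS := hB.nonneg
  have hcomp : HasCompactSupport c :=
    HasCompactSupport.of_support_subset_isCompact (isCompact_closedBall m0 2)
      ((subset_tsupport c).trans hsupp)
  have hint : ∀ k i : ℕ, Integrable (fun v ↦ ‖v‖ ^ k * ‖iteratedFDeriv ℝ i c v‖) := by
    intro k i
    have h1 := hc.continuous_iteratedFDeriv (m := i) (by exact_mod_cast le_top)
    apply Continuous.integrable_of_hasCompactSupport (by fun_prop)
    exact ((hcomp.iteratedFDeriv (𝕜 := ℝ) i).norm).mul_left
  have hI : ∀ i ≤ n, ∫ v, ‖v‖ ^ 0 * ‖iteratedFDeriv ℝ i c v‖ ≤ S * (vol + 1) := by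
    intro i hi
    have hle : ∀ v, ‖v‖ ^ 0 * ‖iteratedFDeriv ℝ i c v‖ ≤
        (Metric.closedBall m0 2).indicator (fun _ => S) v := by
      intro v
      by_cases hv : v ∈ Metric.closedBall m0 2
      · simpa [hv] using hB i hi v
      · have : iteratedFDeriv ℝ i c v = 0 := by
          by_contra h
          exact hv (hsupp (support_iteratedFDeriv_subset i h))
        simp [this, hv]
    calc _ ≤ ∫ v, (Metric.closedBall m0 2).indicator (fun _ => S) v := by
          apply integral_mono (hint 0 i) _ hle
          exact (integrable_indicator_iff measurableSet_closedBall).2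
            (integrableOn_const (isCompact_closedBall m0 2).measure_lt_top.ne)
      _ = vol * S := by
          rw [integral_indicator measurableSet_closedBall]
          simp [Measure.real, hvol]
          left
          rw [Measure.addHaar_closedBall_center]
      _ ≤ _ := by nlinarith
  have key : ∀ m ≤ n, ‖σ‖ ^ m * ‖𝓕 c σ‖ ≤ 2 ^ n * ((n + 1) * (vol + 1)) * S := by
    intro m hm
    have := Real.pow_mul_norm_iteratedFDeriv_fourier_le (K := ⊤) (N := ⊤) hc
      (fun k n _ _ => hint k n) (k := 0) (n := m) (by simp) (by simp) σ
    simp only [norm_iteratedFDeriv_zero] at this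
    refine this.trans ?_
    have hsum : ∑ p ∈ Finset.range (0 + 1) ×ˢ Finset.range (m + 1),
        ∫ v, ‖v‖ ^ p.1 * ‖iteratedFDeriv ℝ p.2 c v‖ ≤ (n + 1) * (S * (vol + 1)) := by
      calc _ ≤ ∑ p ∈ Finset.range (0 + 1) ×ˢ Finset.range (m + 1), S * (vol + 1) := by
            apply Finset.sum_le_sum
            rintro ⟨p, q⟩ hp
            simp at hp
            obtain ⟨hq, rfl⟩ := hp
            exact hI q (by omega)
        _ = (m + 1) * (S * (vol + 1)) := by simp
        _ ≤ _ := by gcongr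
    have h2 : (2:ℝ) ^ m ≤ 2 ^ n := by gcongr; norm_num
    have h0 : 0 ≤ ((n:ℝ) + 1) * (S * (vol + 1)) := by positivity
    calc _ ≤ 2 ^ n * ((n + 1) * (S * (vol + 1))) := by
          simp only [Nat.cast_zero, mul_zero, zero_add, pow_zero, one_mul]
          gcongr
      _ = _ := by ring
  have h0 := key 0 (Nat.zero_le _)
  rw [pow_zero, one_mul] at h0
  have := hW_ge σ (norm_nonneg _) h0 (key n le_rfl)
  linarith
end Four

set_option linter.unusedSectionVars false

section Blk
variable {V : Type*} [NormedAddCommGroup V] [InnerProductSpace ℝ V] [FiniteDimensional ℝ V]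
  [MeasurableSpace V] [BorelSpace V]

open FourierTransform Module ComplexConjugate

/-- `e^{2π i s}`. -/
def ee (s : ℝ) : ℂ := ((Real.fourierChar s : Circle) : ℂ)

theorem norm_ee (s : ℝ) : ‖ee s‖ = 1 := Circle.norm_coe _

theorem ee_add (s r : ℝ) : ee (s + r) = ee s * ee r := by
  simp [ee, AddChar.map_add_eq_mul]

theorem ee_neg (s : ℝ) : ee (-s) = conj (ee s) := by
  simp [ee, AddChar.map_neg_eq_inv]

theorem ee_eq (s : ℝ) : ee s = Complex.exp ((2 * Real.pi * Complex.I) * s) := by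
  rw [ee, Real.fourierChar_apply]; congr 1; push_cast; ring

theorem ee_contDiff : ContDiff ℝ (⊤ : ℕ∞) ee := by
  have : ee = fun s : ℝ => Complex.exp ((2 * Real.pi * Complex.I) * s) := funext ee_eq
  rw [this]
  have : ContDiff ℝ (⊤ : ℕ∞) (fun s : ℝ => (s : ℂ)) := Complex.ofRealCLM.contDiff
  fun_prop

@[fun_prop]
theorem ee_continuous : Continuous ee := ee_contDiff.continuous

/-- Smooth compactly supported functions. -/
def CcV {V : Type*} [NormedAddCommGroup V] [NormedSpace ℝ V] (u : V → ℂ) : Prop :=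
  Sm u ∧ HasCompactSupport u

/-- squared L2 norm -/
def n2 (u : V → ℂ) : ℝ := ∫ x, ‖u x‖ ^ 2

theorem n2_nonneg (u : V → ℂ) : 0 ≤ n2 u := integral_nonneg fun _ => by positivity

/-- integrand of the form -/
def KF (t : ℝ) (b : V × V → ℂ) (u w : V → ℂ) (z : V × V × V) : ℂ :=
  b (t • z.2.1 + (1 - t) • z.2.2, z.1) * ee (inner ℝ z.1 (z.2.1 - z.2.2)) * u z.2.2 *
    conj (w z.2.1)

/-- sesquilinear form -/
def BF (t : ℝ) (b : V × V → ℂ) (u w : V → ℂ) : ℂ := ∫ z, KF t b u w z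

theorem KF_compact {t : ℝ} {b : V × V → ℂ} {u w : V → ℂ} (hb : HasCompactSupport b)
    (hu : HasCompactSupport u) (hw : HasCompactSupport w) : HasCompactSupport (KF t b u w) := by
  apply HasCompactSupport.of_support_subset_isCompact
    ((hb.isCompact.image continuous_snd).prod (hw.isCompact.prod hu.isCompact))
  intro z hz
  simp only [Function.mem_support, KF] at hz
  refine ⟨⟨_, subset_tsupport b (a := (t • z.2.1 + (1 - t) • z.2.2, z.1)) ?_, rfl⟩,
    subset_tsupport _ ?_, subset_tsupport _ ?_⟩
  · intro h; apply hz; simp [h]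
  · intro h; apply hz; simp [h]
  · intro h; apply hz; simp [h]

theorem KF_continuous {t : ℝ} {b : V × V → ℂ} {u w : V → ℂ} (hb : Continuous b)
    (hu : Continuous u) (hw : Continuous w) : Continuous (KF t b u w) := by
  unfold KF; fun_prop

theorem KF_integrable {t : ℝ} {b : V × V → ℂ} {u w : V → ℂ} (hb : CcV b)
    (hu : CcV u) (hw : CcV w) : Integrable (KF t b u w) :=
  (KF_continuous hb.1.continuous hu.1.continuous hw.1.continuous).integrable_of_hasCompactSupport
    (KF_compact hb.2 hu.2 hw.2)

theorem CcV.integrable {u : V → ℂ} (hu : CcV u) : Integrable u :=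
  hu.1.continuous.integrable_of_hasCompactSupport hu.2

theorem CcV.integrable_sq {u : V → ℂ} (hu : CcV u) : Integrable (fun x => ‖u x‖ ^ 2) := by
  have := hu.1.continuous
  apply Continuous.integrable_of_hasCompactSupport (by fun_prop)
  have : HasCompactSupport fun x => ‖u x‖ := hu.2.norm
  exact this.comp_left (g := fun x : ℝ => x ^ 2) (by simp)

theorem CcV.lintegral_sq {u : V → ℂ} (hu : CcV u) :
    ∫⁻ x, ‖u x‖ₑ ^ 2 = ENNReal.ofReal (n2 u) := by
  rw [n2, ofReal_integral_eq_lintegral_ofReal hu.integrable_sq (ae_of_all _ fun _ => by positivity)]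
  congr 1; ext x
  rw [← ofReal_norm, ENNReal.ofReal_pow (norm_nonneg _)]

theorem CcV.plancherel {u : V → ℂ} (hu : CcV u) :
    ∫⁻ x, ‖𝓕 u x‖ₑ ^ 2 = ENNReal.ofReal (n2 u) := by
  set U := hu.2.toSchwartzMap hu.1 with hU
  have h1 : ∀ x, 𝓕 u x = 𝓕 U x := by
    intro x
    rw [SchwartzMap.fourier_coe]; rfl
  have h2 : n2 u = ∫ x, ‖𝓕 U x‖ ^ 2 := by
    rw [SchwartzMap.integral_norm_sq_fourier]; rfl
  have hint : Integrable (fun x => ‖𝓕 U x‖ ^ 2) := by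
    have := (𝓕 U).memLp 2 (μ := volume)
    simpa using this.integrable_norm_pow (by norm_num)
  rw [h2, ofReal_integral_eq_lintegral_ofReal hint (ae_of_all _ fun _ => by positivity)]
  congr 1; ext x
  rw [h1, ← ofReal_norm, ENNReal.ofReal_pow (norm_nonneg _)]

theorem CcV.fourier_continuous {u : V → ℂ} (hu : CcV u) : Continuous (𝓕 u) := by
  set U : SchwartzMap V ℂ := hu.2.toSchwartzMap hu.1 with hU
  have h := (𝓕 U : SchwartzMap V ℂ).continuous
  have h1 : (𝓕 u) = ⇑(𝓕 U : SchwartzMap V ℂ) := by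
    rw [SchwartzMap.fourier_coe]; rfl
  rw [h1]; exact h

theorem fourier_ee (u : V → ℂ) (η : V) : 𝓕 u η = ∫ y, ee (-inner ℝ y η) * u y := by
  rw [Real.fourier_eq]; rfl

theorem conj_fourier_ee (w : V → ℂ) (η : V) :
    conj (𝓕 w η) = ∫ x, ee (inner ℝ x η) * conj (w x) := by
  rw [fourier_ee, ← integral_conj]
  congr 1; ext x; rw [map_mul, ← ee_neg, neg_neg]

/-- frozen `ξ` -/
theorem inner_block {t : ℝ} {c : V → ℂ} {u w : V → ℂ} (hc : CcV c) (hci : Integrable (𝓕 c))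
    (hu : CcV u) (hw : CcV w) (ξ : V) :
    ∫ p : V × V, c (t • p.1 + (1 - t) • p.2) * ee (inner ℝ ξ (p.1 - p.2)) * u p.2 * conj (w p.1)
     = ∫ σ, 𝓕 c σ * (conj (𝓕 w (ξ + t • σ)) * 𝓕 u (ξ - (1 - t) • σ)) := by
  have hinv : ∀ m, c m = ∫ σ, ee (inner ℝ σ m) * 𝓕 c σ := by
    intro m
    have := hc.1.continuous.fourierInv_fourier_eq hc.integrable hci
    conv_lhs => rw [← this]
    rw [Real.fourierInv_eq]; rfl
  have hcu := hu.1.continuous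
  have hcw := hw.1.continuous
  have hcc : Continuous (𝓕 c) := hc.fourier_continuous
  have e1 : ∀ p : V × V, c (t • p.1 + (1 - t) • p.2) * ee (inner ℝ ξ (p.1 - p.2)) * u p.2 *
      conj (w p.1) = ∫ σ, ee (inner ℝ σ (t • p.1 + (1 - t) • p.2)) * ee (inner ℝ ξ (p.1 - p.2)) *
        ((conj (w p.1) * u p.2) * 𝓕 c σ) := by
    intro p
    rw [hinv, ← integral_mul_const, ← integral_mul_const, ← integral_mul_const]
    congr 1; ext σ; ring
  simp_rw [e1]
  rw [integral_integral_swap]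
  · congr 1; ext σ
    have e2 : ∀ p : V × V, ee (inner ℝ σ (t • p.1 + (1 - t) • p.2)) *
        ee (inner ℝ ξ (p.1 - p.2)) * ((conj (w p.1) * u p.2) * 𝓕 c σ) =
        𝓕 c σ * ((ee (inner ℝ p.1 (ξ + t • σ)) * conj (w p.1)) *
          (ee (-inner ℝ p.2 (ξ - (1 - t) • σ)) * u p.2)) := by
      intro p
      have : ee (inner ℝ σ (t • p.1 + (1 - t) • p.2)) * ee (inner ℝ ξ (p.1 - p.2)) =
        ee (inner ℝ p.1 (ξ + t • σ)) * ee (-inner ℝ p.2 (ξ - (1 - t) • σ)) := by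
        rw [← ee_add, ← ee_add]
        congr 1
        simp only [inner_add_right, inner_sub_right, inner_smul_right, real_inner_comm]
        ring
      rw [this]; ring
    simp_rw [e2]
    rw [integral_const_mul]
    congr 1
    rw [conj_fourier_ee, fourier_ee]
    exact integral_prod_mul (μ := (volume : Measure V)) (ν := (volume : Measure V))
      (fun x => ee (inner ℝ x (ξ + t • σ)) * conj (w x))
      (fun y => ee (-inner ℝ y (ξ - (1 - t) • σ)) * u y)
  · have h1 : Integrable (fun p : V × V => conj (w p.1) * u p.2) := by
      have hw' : Integrable (fun x => conj (w x)) := by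
        have := hw.integrable
        refine (integrable_norm_iff (by fun_prop)).1 ?_
        simpa using this.norm
      exact hw'.mul_prod hu.integrable
    have h2 := h1.mul_prod hci
    refine h2.bdd_mul (c := 1) (Continuous.aestronglyMeasurable (by fun_prop)) (ae_of_all _ ?_)
    intro x; simp [norm_ee]

theorem cs_lintegral {u w : V → ℂ} (hu : CcV u) (hw : CcV w) (c1 c2 : V) :
    ∫⁻ ξ, ‖𝓕 w (ξ + c1)‖ₑ * ‖𝓕 u (ξ - c2)‖ₑ ≤ ENNReal.ofReal (√(n2 u) * √(n2 w)) := by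
  have hu' := hu.fourier_continuous
  have hw' := hw.fourier_continuous
  refine (ENNReal.lintegral_mul_le_Lp_mul_Lq volume (p := 2) (q := 2)
    (Real.holderConjugate_iff.2 ⟨by norm_num, by norm_num⟩)
    (f := fun ξ => ‖𝓕 w (ξ + c1)‖ₑ) (g := fun ξ => ‖𝓕 u (ξ - c2)‖ₑ)
    (by fun_prop) (by fun_prop)).trans ?_
  rw [lintegral_add_right_eq_self (fun ξ => ‖𝓕 w ξ‖ₑ ^ (2:ℝ)),
    lintegral_sub_right_eq_self (fun ξ => ‖𝓕 u ξ‖ₑ ^ (2:ℝ))]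
  simp only [ENNReal.rpow_two]
  rw [hu.plancherel, hw.plancherel, ENNReal.ofReal_rpow_of_nonneg (n2_nonneg _) (by norm_num),
    ENNReal.ofReal_rpow_of_nonneg (n2_nonneg _) (by norm_num), ← ENNReal.ofReal_mul (Real.rpow_nonneg (n2_nonneg _) _)]
  rw [← Real.sqrt_eq_rpow, ← Real.sqrt_eq_rpow, mul_comm]

variable (V) in
theorem block_bound : ∃ C > 0, ∀ t ∈ Set.Icc (0:ℝ) 1, ∀ (b : V × V → ℂ) (S : ℝ), CcV b →
    Bd (finrank ℝ V + 1) b S → ∀ (μ ν : V) (u w : V → ℂ), CcV u → CcV w →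
    (∀ y, u y ≠ 0 → y ∈ Metric.closedBall ν 1) → (∀ x, w x ≠ 0 → x ∈ Metric.closedBall μ 1) →
    ‖BF t b u w‖ ≤ C * S * √(n2 u) * √(n2 w) := by
  obtain ⟨C0, hC0, hdec⟩ := fourier_decay V
  let χ0 : ContDiffBump (0 : V) := ⟨1, 2, by norm_num, by norm_num⟩
  set χ : V → ℂ := fun x => ((χ0 x : ℝ) : ℂ) with hχ
  have hχs : Sm χ := Complex.ofRealCLM.contDiff.comp χ0.contDiff
  have hχc : HasCompactSupport χ := χ0.hasCompactSupport.comp_left (g := Complex.ofReal) (by simp)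
  have hχt : tsupport χ ⊆ Metric.closedBall 0 2 := by
    refine closure_minimal ?_ Metric.isClosed_closedBall
    intro x hx
    have : χ0 x ≠ 0 := by simpa [hχ] using hx
    have h2 := χ0.support_eq ▸ (Function.mem_support.2 this)
    exact Metric.ball_subset_closedBall h2
  obtain ⟨A, hA, hχB⟩ := Bd.exists_of_compact hχs hχc (finrank ℝ V + 1)
  have hI0 : 0 ≤ ∫ σ : V, hW σ := integral_nonneg fun _ => (hW_pos _).le
  refine ⟨C0 * (2 ^ (finrank ℝ V + 1) * A) * ((∫ σ : V, hW σ) + 1), by positivity, ?_⟩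
  intro t ht b S hb hB μ ν u w hu hw hus hws
  have hS := hB.nonneg
  set m0 := t • μ + (1 - t) • ν with hm0
  set c : V → V → ℂ := fun ξ m => χ (m + -m0) * b (m, ξ) with hcdef
  have hcs : ∀ ξ, Sm (c ξ) := by
    intro ξ
    have := hb.1
    simp only [hcdef, Sm] at *
    fun_prop
  have hct : ∀ ξ, tsupport (c ξ) ⊆ Metric.closedBall m0 2 := by
    intro ξ
    refine closure_minimal ?_ Metric.isClosed_closedBall
    intro x hx
    have h1 : χ (x + -m0) ≠ 0 := by
      intro h; apply hx; simp [hcdef, h]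
    have := hχt (subset_tsupport _ h1)
    simpa [dist_eq_norm, sub_eq_add_neg] using this
  have hcc : ∀ ξ, CcV (c ξ) := fun ξ => ⟨hcs ξ, HasCompactSupport.of_support_subset_isCompact
      (isCompact_closedBall m0 2) ((subset_tsupport _).trans (hct ξ))⟩
  have hcB : ∀ ξ, Bd (finrank ℝ V + 1) (c ξ) (2 ^ (finrank ℝ V + 1) * A * S) := by
    intro ξ
    refine Bd.mul ?_ ?_ (hχB.translate (-m0)) ?_
    · have := hχs; simp only [Sm] at *; fun_prop
    · have := hb.1; simp only [Sm] at *; fun_prop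
    · have h1 := (hB.translate ((0 : V), ξ)).comp_linear (G := V) ?_ (ContinuousLinearMap.inl ℝ V V)
        (ContinuousLinearMap.norm_inl_le_one ℝ V V)
      · simpa using h1
      · have := hb.1; simp only [Sm] at *; fun_prop
  have hcd : ∀ ξ σ, ‖𝓕 (c ξ) σ‖ ≤ C0 * (2 ^ (finrank ℝ V + 1) * A * S) * hW σ := fun ξ σ =>
    hdec (c ξ) m0 _ (hcs ξ) (hct ξ) (hcB ξ) σ
  set K := C0 * (2 ^ (finrank ℝ V + 1) * A * S) with hK
  have hK0 : 0 ≤ K := by positivity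
  have hci : ∀ ξ, Integrable (𝓕 (c ξ)) := fun ξ =>
    ((hW_integrable V).const_mul K).mono' (hcc ξ).fourier_continuous.aestronglyMeasurable
      (ae_of_all _ (hcd ξ))
  have hKF : ∀ z, KF t b u w z = c z.1 (t • z.2.1 + (1 - t) • z.2.2) *
      ee (inner ℝ z.1 (z.2.1 - z.2.2)) * u z.2.2 * conj (w z.2.1) := by
    rintro ⟨ξ, x, y⟩
    simp only [KF]
    by_cases h1 : u y = 0
    · simp [h1]
    by_cases h2 : w x = 0
    · simp [h2]
    have h1' := hus y h1
    have h2' := hws x h2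
    have : χ (t • x + (1 - t) • y + -m0) = 1 := by
      simp only [hχ]
      rw [χ0.one_of_mem_closedBall]; · simp
      have hr : χ0.rIn = 1 := rfl
      rw [mem_closedBall_zero_iff, hr]
      rw [mem_closedBall_iff_norm] at h1' h2'
      have : t • x + (1 - t) • y + -m0 = t • (x - μ) + (1 - t) • (y - ν) := by
        simp only [hm0, smul_sub]; abel
      rw [this]
      have ht1 := ht.1
      have ht2 : 0 ≤ 1 - t := by linarith [ht.2]
      calc _ ≤ ‖t • (x - μ)‖ + ‖(1 - t) • (y - ν)‖ := norm_add_le _ _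
        _ = t * ‖x - μ‖ + (1 - t) * ‖y - ν‖ := by
          rw [norm_smul, norm_smul, Real.norm_of_nonneg ht1, Real.norm_of_nonneg ht2]
        _ ≤ t * 1 + (1 - t) * 1 := by gcongr
        _ = 1 := by ring
    simp [hcdef, this]
  have hBF : BF t b u w = ∫ ξ, ∫ σ, 𝓕 (c ξ) σ *
      (conj (𝓕 w (ξ + t • σ)) * 𝓕 u (ξ - (1 - t) • σ)) := by
    unfold BF
    rw [show (volume : Measure (V × V × V)) = volume.prod volume from rfl, integral_prod]
    · congr 1; ext ξ
      rw [← inner_block (hcc ξ) (hci ξ) hu hw ξ]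
      congr 1; ext p
      exact hKF (ξ, p)
    · exact KF_integrable hb hu hw
  have hfu := hu.fourier_continuous
  have hfw := hw.fourier_continuous
  have hWm : Measurable (fun σ : V => hW σ) := by
    unfold hW; fun_prop
  have main : ‖BF t b u w‖ₑ ≤ ENNReal.ofReal (K * (∫ σ : V, hW σ) * (√(n2 u) * √(n2 w))) := by
    rw [hBF]
    calc _ ≤ ∫⁻ ξ, ‖∫ σ, 𝓕 (c ξ) σ * (conj (𝓕 w (ξ + t • σ)) * 𝓕 u (ξ - (1 - t) • σ))‖ₑ :=
          enorm_integral_le_lintegral_enorm _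
      _ ≤ ∫⁻ ξ, ∫⁻ σ, ENNReal.ofReal (K * hW σ) *
            (‖𝓕 w (ξ + t • σ)‖ₑ * ‖𝓕 u (ξ - (1 - t) • σ)‖ₑ) := by
          refine lintegral_mono fun ξ => ?_
          refine (enorm_integral_le_lintegral_enorm _).trans ?_
          refine lintegral_mono fun σ => ?_
          simp only [enorm_mul, RCLike.enorm_conj]
          gcongr
          rw [← ofReal_norm]
          exact ENNReal.ofReal_le_ofReal (hcd ξ σ)
      _ = ∫⁻ σ, ∫⁻ ξ, ENNReal.ofReal (K * hW σ) *
            (‖𝓕 w (ξ + t • σ)‖ₑ * ‖𝓕 u (ξ - (1 - t) • σ)‖ₑ) := by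
          apply lintegral_lintegral_swap
          apply Measurable.aemeasurable
          have m1 : Measurable fun a : V × V => ENNReal.ofReal (K * hW a.2) := by fun_prop
          have m2 := (by fun_prop : Continuous fun a : V × V =>
            𝓕 w (a.1 + t • a.2)).measurable.enorm
          have m3 := (by fun_prop : Continuous fun a : V × V =>
            𝓕 u (a.1 - (1 - t) • a.2)).measurable.enorm
          exact m1.mul (m2.mul m3)
      _ ≤ ∫⁻ σ : V, ENNReal.ofReal (K * hW σ) * ENNReal.ofReal (√(n2 u) * √(n2 w)) := by
          refine lintegral_mono fun σ => ?_
          simp only []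
          rw [lintegral_const_mul']
          · gcongr
            exact cs_lintegral hu hw _ _
          · exact ENNReal.ofReal_ne_top
      _ = _ := by
          rw [lintegral_mul_const' _ _ ENNReal.ofReal_ne_top,
            ← ofReal_integral_eq_lintegral_ofReal ((hW_integrable V).const_mul K)
            (ae_of_all _ fun σ => mul_nonneg hK0 (hW_pos σ).le), ← ENNReal.ofReal_mul,
            integral_const_mul]
          exact integral_nonneg fun σ => mul_nonneg hK0 (hW_pos σ).le
  rw [← ofReal_norm, ENNReal.ofReal_le_ofReal_iff (by positivity)] at main
  refine main.trans ?_
  have : K * (∫ σ : V, hW σ) ≤ K * ((∫ σ : V, hW σ) + 1) := by gcongr; linarith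
  calc _ ≤ K * ((∫ σ : V, hW σ) + 1) * (√(n2 u) * √(n2 w)) := by gcongr
    _ = _ := by rw [hK]; ring
end Blk

section Comm
variable {V : Type*} [NormedAddCommGroup V] [InnerProductSpace ℝ V] [FiniteDimensional ℝ V]
  [MeasurableSpace V] [BorelSpace V]

open FourierTransform Module ComplexConjugate

theorem ee_hasDerivAt (s : ℝ) : HasDerivAt ee (2 * Real.pi * Complex.I * ee s) s := by
  have h : ee = fun s : ℝ => Complex.exp ((2 * Real.pi * Complex.I) * s) := funext ee_eq
  rw [h]
  have h1 : HasDerivAt (fun s : ℝ => (s : ℂ)) 1 s := Complex.ofRealCLM.hasDerivAt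
  have := (h1.const_mul (2 * Real.pi * Complex.I)).cexp
  convert this using 1
  ring

theorem Sm.fder {E : Type*} [NormedAddCommGroup E] [NormedSpace ℝ E] {b : E → ℂ} (hb : Sm b)
    (v : E) : Sm (fun z => fderiv ℝ b z v) := by
  have : ContDiff ℝ (⊤ : ℕ∞) (fderiv ℝ b) := hb.fderiv_right (by norm_cast)
  exact this.clm_apply contDiff_const

theorem CcV.fder {E : Type*} [NormedAddCommGroup E] [NormedSpace ℝ E] {b : E → ℂ} (hb : CcV b)
    (v : E) : CcV (fun z => fderiv ℝ b z v) :=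
  ⟨hb.1.fder v, hb.2.fderiv_apply (𝕜 := ℝ) v⟩

theorem xi_commutator {t : ℝ} {b : V × V → ℂ} {u w : V → ℂ} (hb : CcV b) (hu : CcV u) (hw : CcV w)
    (e : V) : ∫ z : V × V × V, (2 * Real.pi * Complex.I * (inner ℝ e (z.2.1 - z.2.2) : ℝ)) *
      KF t b u w z = - BF t (fun z => fderiv ℝ b z (0, e)) u w := by
  set F : V × V × V → ℂ := fun z => b (t • z.2.1 + (1 - t) • z.2.2, z.1) * u z.2.2 * conj (w z.2.1)
    with hF
  set G : V × V × V → ℂ := fun z => ee (inner ℝ z.1 (z.2.1 - z.2.2)) with hG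
  have hb' := hb.1
  have hu' := hu.1
  have hw' := hw.1
  have hws : Sm (fun x => conj (w x)) := Complex.conjCLE.contDiff.comp hw'
  have hFs : Sm F := by
    have h2 : Sm (fun z : V × V × V => conj (w z.2.1)) := hws.comp (by fun_prop)
    simp only [Sm] at *
    simp only [hF]
    fun_prop
  have hGs : Sm G := by
    exact ee_contDiff.comp (ContDiff.inner ℝ contDiff_fst (by fun_prop))
  have hGn : ∀ z, ‖G z‖ = 1 := fun z => norm_ee _
  have hFG : ∀ z, KF t b u w z = F z * G z := by intro z; simp only [KF, hF, hG]; ring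
  have hFc : HasCompactSupport F := by
    have h1 := KF_compact (t := t) hb.2 hu.2 hw.2
    have h2 : F = fun z => KF t b u w z * conj (G z) := by
      ext z; rw [hFG, mul_assoc, Complex.mul_conj, Complex.normSq_eq_norm_sq, hGn]; simp
    rw [h2]; exact h1.mul_right
  set v : V × V × V := (e, 0, 0) with hv
  have dG : ∀ z, fderiv ℝ G z v = 2 * Real.pi * Complex.I * (inner ℝ e (z.2.1 - z.2.2) : ℝ) * G z := by
    intro z
    have hd : DifferentiableAt ℝ G z := (hGs.differentiable (by simp)) z
    rw [← hd.lineDeriv_eq_fderiv]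
    apply HasLineDerivAt.lineDeriv
    unfold HasLineDerivAt
    set c := inner ℝ z.1 (z.2.1 - z.2.2)
    set d := inner ℝ e (z.2.1 - z.2.2)
    have hfun : (fun s : ℝ => G (z + s • v)) = ee ∘ fun s : ℝ => c + s * d := by
      funext s
      simp [hG, hv, c, d, inner_add_left, inner_smul_left]
    have h1 : HasDerivAt (fun s : ℝ => c + s * d) d 0 := by
      simpa using ((hasDerivAt_id (0:ℝ)).mul_const d).const_add c
    have h2 := (ee_hasDerivAt (c + 0 * d)).scomp (0:ℝ) h1
    rw [hfun]
    have h3 : d • (2 * Real.pi * Complex.I * ee (c + 0 * d)) =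
        2 * Real.pi * Complex.I * (d : ℝ) * G z := by
      rw [Complex.real_smul]; simp only [zero_mul, add_zero, hG]; ring
    rw [← h3]; exact h2
  have dF : ∀ z, fderiv ℝ F z v = fderiv ℝ b (t • z.2.1 + (1 - t) • z.2.2, z.1) (0, e) *
      u z.2.2 * conj (w z.2.1) := by
    intro z
    have hd : DifferentiableAt ℝ F z := (hFs.differentiable (by simp)) z
    rw [← hd.lineDeriv_eq_fderiv]
    apply HasLineDerivAt.lineDeriv
    unfold HasLineDerivAt
    have hbd : HasFDerivAt b (fderiv ℝ b (t • z.2.1 + (1 - t) • z.2.2, z.1))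
      (t • z.2.1 + (1 - t) • z.2.2, z.1) := (hb'.differentiable (by simp)).differentiableAt.hasFDerivAt
    have hl := (hbd.hasLineDerivAt (0, e))
    unfold HasLineDerivAt at hl
    have hfun : (fun s : ℝ => F (z + s • v)) = fun s : ℝ =>
        b ((t • z.2.1 + (1 - t) • z.2.2, z.1) + s • (0, e)) * u z.2.2 * conj (w z.2.1) := by
      funext s
      simp [hF, hv]
    rw [hfun]
    exact (hl.mul_const (u z.2.2)).mul_const (conj (w z.2.1))
  have i1 : (volume : Measure (V × V)).IsAddHaarMeasure :=
    inferInstanceAs ((volume : Measure V).prod (volume : Measure V)).IsAddHaarMeasure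
  have i2 : (volume : Measure (V × V × V)).IsAddHaarMeasure :=
    inferInstanceAs ((volume : Measure V).prod (volume : Measure (V × V))).IsAddHaarMeasure
  have hmain := integral_mul_fderiv_eq_neg_fderiv_mul_of_integrable (𝕜 := ℂ)
    (μ := (volume : Measure (V × V × V)))
    (f := F) (g := G) (v := v) ?_ ?_ ?_ (fun x _ => hFs.differentiable (by simp) x)
    (fun x _ => hGs.differentiable (by simp) x)
  · calc _ = ∫ z, F z * fderiv ℝ G z v := by
          congr 1; ext z; rw [dG, hFG]; ring
      _ = _ := by
          rw [hmain, BF]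
          congr 2; ext z
          rw [dF]; simp only [KF, hG]; ring
  · exact ((hFs.fder v).continuous.mul hGs.continuous).integrable_of_hasCompactSupport
      ((hFc.fderiv_apply (𝕜 := ℝ) v).mul_right)
  · exact (hFs.continuous.mul (hGs.fder v).continuous).integrable_of_hasCompactSupport hFc.mul_right
  · exact (hFs.continuous.mul hGs.continuous).integrable_of_hasCompactSupport hFc.mul_right

/-- weighted bound for the form -/
def GB (t : ℝ) (Pu Pw : V → Prop) (D : ℝ) (n : ℕ) (C : ℝ) : Prop :=
  ∀ (b : V × V → ℂ) (S : ℝ), CcV b → Bd n b S → ∀ (u w : V → ℂ), CcV u → CcV w →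
    (∀ y, u y ≠ 0 → Pu y) → (∀ x, w x ≠ 0 → Pw x) →
    D * ‖BF t b u w‖ ≤ C * S * √(n2 u) * √(n2 w)

/-- cut by linear weight -/
theorem weight_prop {u : V → ℂ} (hu : CcV u) {P : V → Prop} (hs : ∀ y, u y ≠ 0 → P y) {e : V}
    {β : ℝ} (hP : ∀ y, P y → |inner ℝ e y - β| ≤ 1) :
    CcV (fun y => ((inner ℝ e y - β : ℝ) : ℂ) * u y) ∧
    (∀ y, ((inner ℝ e y - β : ℝ) : ℂ) * u y ≠ 0 → P y) ∧
    n2 (fun y => ((inner ℝ e y - β : ℝ) : ℂ) * u y) ≤ n2 u := by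
  have h1 : CcV (fun y => ((inner ℝ e y - β : ℝ) : ℂ) * u y) := by
    refine ⟨?_, hu.2.mul_left⟩
    have hl : Sm (fun y : V => ((inner ℝ e y - β : ℝ) : ℂ)) :=
      Complex.ofRealCLM.contDiff.comp (f := fun y : V => inner ℝ e y - β)
        ((contDiff_const.inner ℝ contDiff_id).sub contDiff_const)
    exact hl.mul hu.1
  refine ⟨h1, fun y hy => hs y fun h => hy (by simp [h]), ?_⟩
  apply integral_mono h1.integrable_sq hu.integrable_sq
  intro y
  simp only
  by_cases h : u y = 0
  · simp [h]
  have := hP y (hs y h)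
  rw [norm_mul, Complex.norm_real, Real.norm_eq_abs, mul_pow]
  have h3 : |inner ℝ e y - β| ^ 2 ≤ 1 := pow_le_one₀ (abs_nonneg _) this
  nlinarith [sq_nonneg ‖u y‖]

theorem GB.step {t : ℝ} {Pu Pw : V → Prop} {D : ℝ} {n : ℕ} {C : ℝ} (h : GB t Pu Pw D n C)
    (hD : 0 ≤ D) (hC : 0 ≤ C) {e : V} (he : ‖e‖ ≤ 1) {α β : ℝ}
    (hu : ∀ y, Pu y → |inner ℝ e y - β| ≤ 1) (hw : ∀ x, Pw x → |inner ℝ e x - α| ≤ 1) :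
    GB t Pu Pw (|α - β| * D) (n + 1) (3 * C) := by
  intro b S hb hB u w hcu hcw hsu hsw
  have hS := hB.nonneg
  obtain ⟨hu1, hu2, hu3⟩ := weight_prop hcu hsu hu
  obtain ⟨hw1, hw2, hw3⟩ := weight_prop hcw hsw hw
  set u' := fun y => ((inner ℝ e y - β : ℝ) : ℂ) * u y with hu'
  set w' := fun y => ((inner ℝ e y - α : ℝ) : ℂ) * w y with hw'
  have hdb := hb.fder ((0, e) : V × V)
  have hBd := hB.fder hb.1 ((0, e) : V × V) (by simpa using he)
  have b0 := h _ S hdb hBd u w hcu hcw hsu hsw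
  have b1 := h _ S hb (hB.mono (by omega)) u' w hu1 hcw hu2 hsw
  have b2 := h _ S hb (hB.mono (by omega)) u w' hcu hw1 hsu hw2
  have hcomm := xi_commutator (t := t) hb hcu hcw e
  set db := fun z => fderiv ℝ b z ((0, e) : V × V)
  have i0 : Integrable fun z : V × V × V => ((inner ℝ e (z.2.1 - z.2.2) : ℝ) : ℂ) * KF t b u w z := by
    have c1 := KF_continuous (t := t) hb.1.continuous hcu.1.continuous hcw.1.continuous
    refine Continuous.integrable_of_hasCompactSupport ?_ (KF_compact hb.2 hcu.2 hcw.2).mul_left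
    fun_prop
  have hid : ((α - β : ℝ) : ℂ) * BF t b u w = - BF t b u w' + (BF t b u' w +
      ∫ z : V × V × V, ((inner ℝ e (z.2.1 - z.2.2) : ℝ) : ℂ) * KF t b u w z) := by
    unfold BF
    have i1 := KF_integrable (t := t) hb hcu hw1
    have i2 := KF_integrable (t := t) hb hu1 hcw
    rw [← integral_const_mul, ← integral_neg, ← integral_add i2 i0]
    refine Eq.trans ?_ (integral_add i1.neg (i2.add i0))
    congr 1; ext z
    simp only [KF, hu', hw', map_mul, Complex.conj_ofReal, inner_sub_right]
    push_cast
    ring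
  have hc2 : ‖∫ z : V × V × V, ((inner ℝ e (z.2.1 - z.2.2) : ℝ) : ℂ) * KF t b u w z‖ ≤
      ‖BF t db u w‖ := by
    have : ∀ z : V × V × V, (2 * Real.pi * Complex.I * (inner ℝ e (z.2.1 - z.2.2) : ℝ)) *
      KF t b u w z = 2 * Real.pi * Complex.I * (((inner ℝ e (z.2.1 - z.2.2) : ℝ) : ℂ) *
      KF t b u w z) := fun z => by ring
    simp_rw [this] at hcomm
    rw [integral_const_mul] at hcomm
    rw [← norm_neg (BF t db u w), ← hcomm, norm_mul]
    have h2 : 1 ≤ ‖(2 * Real.pi * Complex.I : ℂ)‖ := by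
      simp [abs_of_pos Real.pi_pos]
      linarith [Real.pi_gt_three]
    exact le_mul_of_one_le_left (norm_nonneg _) h2
  have hn : |α - β| * ‖BF t b u w‖ ≤ ‖BF t b u w'‖ + (‖BF t b u' w‖ + ‖BF t db u w‖) := by
    have : |α - β| * ‖BF t b u w‖ = ‖((α - β : ℝ) : ℂ) * BF t b u w‖ := by
      rw [norm_mul, Complex.norm_real, Real.norm_eq_abs]
    rw [this, hid]
    refine (norm_add_le _ _).trans ?_
    rw [norm_neg]
    gcongr
    refine (norm_add_le _ _).trans ?_
    gcongr
  have s1 : C * S * √(n2 u') * √(n2 w) ≤ C * S * √(n2 u) * √(n2 w) := by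
    gcongr
  have s2 : C * S * √(n2 u) * √(n2 w') ≤ C * S * √(n2 u) * √(n2 w) := by
    gcongr
  have := mul_le_mul_of_nonneg_left hn hD
  linarith

theorem GB.pow {t : ℝ} {Pu Pw : V → Prop} {D : ℝ} {n : ℕ} {C : ℝ} (h : GB t Pu Pw D n C)
    (hD : 0 ≤ D) (hC : 0 ≤ C) {e : V} (he : ‖e‖ ≤ 1) {α β : ℝ}
    (hu : ∀ y, Pu y → |inner ℝ e y - β| ≤ 1) (hw : ∀ x, Pw x → |inner ℝ e x - α| ≤ 1) (M : ℕ) :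
    GB t Pu Pw (|α - β| ^ M * D) (n + M) (3 ^ M * C) := by
  induction M with
  | zero => simpa using h
  | succ M ih =>
    have := ih.step (by positivity) (by positivity) he hu hw
    rw [pow_succ', pow_succ', mul_assoc, mul_assoc]
    exact this

end Comm

section CVS
variable {V : Type*} [NormedAddCommGroup V] [InnerProductSpace ℝ V] [FiniteDimensional ℝ V]
  [MeasurableSpace V] [BorelSpace V]

open FourierTransform Module ComplexConjugate

theorem block_decay (V : Type*) [NormedAddCommGroup V] [InnerProductSpace ℝ V]
    [FiniteDimensional ℝ V] [MeasurableSpace V] [BorelSpace V] :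
    ∃ C > 0, ∀ t ∈ Set.Icc (0:ℝ) 1, ∀ (b : V × V → ℂ) (S : ℝ), CcV b →
    Bd (2 * (finrank ℝ V + 1)) b S → ∀ (μ ν : V) (u w : V → ℂ), CcV u → CcV w →
    (∀ y, u y ≠ 0 → y ∈ Metric.closedBall ν 1) → (∀ x, w x ≠ 0 → x ∈ Metric.closedBall μ 1) →
    ‖BF t b u w‖ ≤ C * S * hW (μ - ν) * (√(n2 u) * √(n2 w)) := by
  obtain ⟨C, hC, h⟩ := block_bound V
  set n := finrank ℝ V + 1 with hn
  refine ⟨2 ^ (finrank ℝ V + 2) * (3 ^ n * C), by positivity, ?_⟩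
  intro t ht b S hb hB μ ν u w hu hw hus hws
  have hS := hB.nonneg
  have g0 : GB t (fun y => y ∈ Metric.closedBall ν 1) (fun x => x ∈ Metric.closedBall μ 1) 1 n C := by
    intro b S hb hB u w hu hw hus hws
    rw [one_mul]
    exact h t ht b S hb hB μ ν u w hu hw hus hws
  set e : V := ‖μ - ν‖⁻¹ • (μ - ν) with he
  have he1 : ‖e‖ ≤ 1 := by
    rw [he, norm_smul, norm_inv, norm_norm]
    exact inv_mul_le_one
  have hdir : ∀ c y : V, y ∈ Metric.closedBall c 1 → |inner ℝ e y - inner ℝ e c| ≤ 1 := by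
    intro c y hy
    rw [← inner_sub_right]
    refine (abs_real_inner_le_norm _ _).trans ?_
    rw [mem_closedBall_iff_norm] at hy
    exact mul_le_one₀ he1 (norm_nonneg _) hy
  have hab : |inner ℝ e μ - inner ℝ e ν| = ‖μ - ν‖ := by
    rw [← inner_sub_right, he, inner_smul_left, real_inner_self_eq_norm_sq]
    simp only [conj_trivial]
    by_cases h0 : ‖μ - ν‖ = 0
    · simp [h0]
    · rw [pow_two, inv_mul_cancel_left₀ h0, abs_norm]
  have g1 := g0.pow (by norm_num) hC.le he1 (hdir ν) (hdir μ) n b S hb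
    (by rw [← two_mul]; exact hB) u w hu hw hus hws
  rw [hab, mul_one] at g1
  have g2 := h t ht b S hb (hB.mono (by omega)) μ ν u w hu hw hus hws
  have h3 : (1:ℝ) ≤ 3 ^ n := one_le_pow₀ (by norm_num)
  have g3 : ‖BF t b u w‖ ≤ 3 ^ n * C * S * √(n2 u) * √(n2 w) := by
    refine g2.trans ?_
    gcongr
    nlinarith
  have := hW_ge (μ - ν) (norm_nonneg _) g3 g1
  refine this.trans (le_of_eq ?_)
  ring

theorem amgm_opt {X K A B : ℝ} (hK : 0 ≤ K) (hA : 0 ≤ A) (hB : 0 ≤ B)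
    (h : ∀ l > 0, X ≤ K * (l * A + l⁻¹ * B)) : X ≤ 2 * K * √A * √B := by
  have h1 : ∀ δ > 0, X ≤ 2 * K * √(A + δ) * √(B + δ) := by
    intro δ hδ
    have pa : 0 < √(A + δ) := Real.sqrt_pos.2 (by linarith)
    have pb : 0 < √(B + δ) := Real.sqrt_pos.2 (by linarith)
    refine (h (√(B + δ) / √(A + δ)) (by positivity)).trans ?_
    have e1 : √(B + δ) / √(A + δ) * A ≤ √(B + δ) * √(A + δ) := by
      rw [div_mul_eq_mul_div, div_le_iff₀ pa, mul_assoc, Real.mul_self_sqrt (by linarith)]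
      gcongr; linarith
    have e2 : (√(B + δ) / √(A + δ))⁻¹ * B ≤ √(B + δ) * √(A + δ) := by
      rw [inv_div, div_mul_eq_mul_div, div_le_iff₀ pb]
      have : √(B + δ) * √(A + δ) * √(B + δ) = √(A + δ) * (B + δ) := by
        rw [mul_comm (√(B + δ)), mul_assoc, Real.mul_self_sqrt (by linarith)]
      rw [this]
      gcongr; linarith
    calc _ ≤ K * (√(B + δ) * √(A + δ) + √(B + δ) * √(A + δ)) := by gcongr
      _ = _ := by ring
  have hc : Continuous fun δ : ℝ => 2 * K * √(A + δ) * √(B + δ) := by fun_prop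
  have ht : Filter.Tendsto (fun δ : ℝ => 2 * K * √(A + δ) * √(B + δ)) (nhdsWithin 0 (Set.Ioi 0))
      (nhds (2 * K * √(A + 0) * √(B + 0))) := (hc.tendsto 0).mono_left nhdsWithin_le_nhds
  rw [add_zero, add_zero] at ht
  exact ge_of_tendsto ht (by filter_upwards [self_mem_nhdsWithin] with δ hδ using h1 δ hδ)

/-- localized function -/
def loc (φ u : V → ℂ) (ν : V) : V → ℂ := fun y => φ (y - ν) * u y

theorem loc_cc {φ u : V → ℂ} (hφ : CcV φ) (hu : CcV u) (ν : V) : CcV (loc φ u ν) := by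
  refine ⟨?_, hu.2.mul_left⟩
  have h1 : Sm (fun y => φ (y - ν)) := hφ.1.comp (contDiff_id.sub contDiff_const)
  exact h1.mul hu.1

theorem BF_split {t : ℝ} {b : V × V → ℂ} {u w φ : V → ℂ} (hb : CcV b) (hu : CcV u) (hw : CcV w)
    (hφ : CcV φ) (hφr : ∀ x, conj (φ x) = φ x) (hφ1 : ∫ x, φ x = 1) :
    BF t b u w = ∫ p : V × V, BF t b (loc φ u p.1) (loc φ w p.2) := by
  have hK : ∀ (p : V × V) z, KF t b (loc φ u p.1) (loc φ w p.2) z =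
      KF t b u w z * (φ (z.2.2 - p.1) * φ (z.2.1 - p.2)) := by
    intro p z
    simp only [KF, loc, map_mul, hφr]; ring
  have c1 := KF_continuous (t := t) hb.1.continuous hu.1.continuous hw.1.continuous
  have c2 := hφ.1.continuous
  unfold BF
  simp_rw [hK]
  rw [integral_integral_swap]
  · congr 1; ext z
    rw [integral_const_mul]
    have := integral_prod_mul (μ := (volume : Measure V)) (ν := (volume : Measure V))
      (fun x => φ (z.2.2 - x)) (fun x => φ (z.2.1 - x))
    rw [integral_sub_left_eq_self, integral_sub_left_eq_self, hφ1] at this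
    rw [show (volume : Measure (V × V)) = volume.prod volume from rfl, this]
    simp
  · have kc := KF_compact (t := t) hb.2 hu.2 hw.2
    set T := tsupport (KF t b u w)
    have hT : IsCompact T := kc
    have hP : IsCompact (tsupport φ) := hφ.2
    have k1 := (((hT.image (f := fun z : V × V × V => z.2.2) (by fun_prop)).prod hP).image
      (f := fun q : V × V => q.1 - q.2) (by fun_prop))
    have k2 := (((hT.image (f := fun z : V × V × V => z.2.1) (by fun_prop)).prod hP).image
      (f := fun q : V × V => q.1 - q.2) (by fun_prop))
    apply Continuous.integrable_of_hasCompactSupport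
    · unfold Function.uncurry; fun_prop
    · refine HasCompactSupport.of_support_subset_isCompact ((k1.prod k2).prod hT) ?_
      rintro ⟨⟨ν, μ⟩, z⟩ hz
      simp only [Function.mem_support, Function.uncurry, ne_eq, mul_eq_zero, not_or] at hz
      obtain ⟨hz1, hz2, hz3⟩ := hz
      have hzT : z ∈ T := subset_tsupport _ hz1
      refine ⟨⟨⟨(z.2.2, z.2.2 - ν), ⟨⟨z, hzT, rfl⟩, subset_tsupport _ hz2⟩, by simp⟩,
        ⟨(z.2.1, z.2.1 - μ), ⟨⟨z, hzT, rfl⟩, subset_tsupport _ hz3⟩, by simp⟩⟩, hzT⟩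

theorem loc_sq {u φ : V → ℂ} (hu : CcV u) (hφ : CcV φ) :
    ∫⁻ ν, ENNReal.ofReal (n2 (loc φ u ν)) = ENNReal.ofReal (n2 φ * n2 u) := by
  have c1 := hu.1.continuous
  have c2 := hφ.1.continuous
  simp_rw [← (loc_cc hφ hu _).lintegral_sq]
  rw [lintegral_lintegral_swap]
  · have : ∀ y, ∫⁻ ν, ‖loc φ u ν y‖ₑ ^ 2 = ENNReal.ofReal (n2 φ) * ‖u y‖ₑ ^ 2 := by
      intro y
      simp only [loc, enorm_mul, mul_pow]
      rw [lintegral_mul_const' _ _ (by finiteness),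
        lintegral_sub_left_eq_self (fun x => ‖φ x‖ₑ ^ 2) y, hφ.lintegral_sq]
    simp_rw [this]
    rw [lintegral_const_mul' _ _ ENNReal.ofReal_ne_top, hu.lintegral_sq,
      ENNReal.ofReal_mul (n2_nonneg _)]
  · apply Continuous.aemeasurable
    unfold Function.uncurry loc; fun_prop

theorem loc_meas {u φ : V → ℂ} (hu : CcV u) (hφ : CcV φ) :
    Measurable fun ν => ENNReal.ofReal (n2 (loc φ u ν)) := by
  have c1 := hu.1.continuous
  have c2 := hφ.1.continuous
  simp_rw [← (loc_cc hφ hu _).lintegral_sq]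
  apply Measurable.lintegral_prod_right'
    (f := fun q : V × V => ‖loc φ u q.1 q.2‖ₑ ^ 2)
  apply Continuous.measurable
  unfold loc; fun_prop

theorem conv1 {h g : V → ENNReal} (hh : Measurable h) (hg : Measurable g) :
    ∫⁻ p : V × V, h (p.2 - p.1) * g p.1 = (∫⁻ x, h x) * ∫⁻ x, g x := by
  rw [show (volume : Measure (V × V)) = volume.prod volume from rfl, lintegral_prod]
  · have : ∀ x, ∫⁻ y, h (y - x) * g x = (∫⁻ x, h x) * g x := by
      intro x
      rw [lintegral_mul_const _ (by fun_prop), lintegral_sub_right_eq_self]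
    simp_rw [this]
    rw [lintegral_const_mul _ hg]
  · fun_prop

theorem conv2 {h g : V → ENNReal} (hh : Measurable h) (hg : Measurable g) :
    ∫⁻ p : V × V, h (p.2 - p.1) * g p.2 = (∫⁻ x, h x) * ∫⁻ x, g x := by
  rw [show (volume : Measure (V × V)) = volume.prod volume from rfl, lintegral_prod_symm]
  · have : ∀ x, ∫⁻ y, h (x - y) * g x = (∫⁻ x, h x) * g x := by
      intro x
      rw [lintegral_mul_const _ (by fun_prop), lintegral_sub_left_eq_self]
    simp_rw [this]
    rw [lintegral_const_mul _ hg]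
  · fun_prop

theorem cv_bound (V : Type*) [NormedAddCommGroup V] [InnerProductSpace ℝ V]
    [FiniteDimensional ℝ V] [MeasurableSpace V] [BorelSpace V] :
    ∃ C > 0, ∀ t ∈ Set.Icc (0:ℝ) 1,
      GB (V := V) t (fun _ => True) (fun _ => True) 1 (2 * (finrank ℝ V + 1)) C := by
  obtain ⟨C, hC, h⟩ := block_decay V
  let φ0 : ContDiffBump (0 : V) := ⟨1 / 2, 1, by norm_num, by norm_num⟩
  set φ : V → ℂ := fun x => ((φ0.normed volume x : ℝ) : ℂ) with hφd
  have hφ : CcV φ := ⟨Complex.ofRealCLM.contDiff.comp φ0.contDiff_normed,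
    φ0.hasCompactSupport_normed.comp_left (g := Complex.ofReal) (by simp)⟩
  have hφr : ∀ x, conj (φ x) = φ x := fun x => Complex.conj_ofReal _
  have hφ1 : ∫ x, φ x = 1 := by
    rw [hφd, integral_complex_ofReal, φ0.integral_normed]; simp
  have hφs : ∀ x, φ x ≠ 0 → ‖x‖ ≤ 1 := by
    intro x hx
    have h1 : φ0.normed volume x ≠ 0 := by simpa [hφd] using hx
    have h2 : x ∈ Metric.ball (0 : V) φ0.rOut := by
      rw [← φ0.support_normed_eq (μ := volume)]; exact h1
    have h3 : φ0.rOut = 1 := rfl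
    rw [h3, mem_ball_zero_iff] at h2
    exact h2.le
  set I := ∫ σ : V, hW σ
  have hI0 : 0 ≤ I := integral_nonneg fun _ => (hW_pos _).le
  have hI : ∫⁻ σ : V, ENNReal.ofReal (hW σ) = ENNReal.ofReal I :=
    (ofReal_integral_eq_lintegral_ofReal (hW_integrable V) (ae_of_all _ fun _ => (hW_pos _).le)).symm
  have hWm : Measurable (fun σ : V => ENNReal.ofReal (hW σ)) := by
    unfold hW; fun_prop
  have hφn := n2_nonneg φ
  refine ⟨2 * (C * I * n2 φ + 1), by positivity, ?_⟩
  intro t ht b S hb hB u w hu hw _ _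
  have hS := hB.nonneg
  rw [one_mul]
  have key : ∀ l > 0, ‖BF t b u w‖ ≤ (C * S * I * n2 φ) * (l * n2 u + l⁻¹ * n2 w) := by
    intro l hl
    have hu0 := n2_nonneg u
    have hw0 := n2_nonneg w
    have : ‖BF t b u w‖ₑ ≤ ENNReal.ofReal ((C * S * I * n2 φ) * (l * n2 u + l⁻¹ * n2 w)) := by
      rw [BF_split hb hu hw hφ hφr hφ1]
      calc _ ≤ ∫⁻ p : V × V, ‖BF t b (loc φ u p.1) (loc φ w p.2)‖ₑ :=
            enorm_integral_le_lintegral_enorm _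
        _ ≤ ∫⁻ p : V × V, (ENNReal.ofReal (C * S * l) * (ENNReal.ofReal (hW (p.2 - p.1)) *
              ENNReal.ofReal (n2 (loc φ u p.1))) + ENNReal.ofReal (C * S * l⁻¹) *
              (ENNReal.ofReal (hW (p.2 - p.1)) * ENNReal.ofReal (n2 (loc φ w p.2)))) := by
            refine lintegral_mono fun p => ?_
            simp only
            have hloc : ∀ (u : V → ℂ) (ν y : V), loc φ u ν y ≠ 0 → y ∈ Metric.closedBall ν 1 := by
              intro u ν y hy
              rw [mem_closedBall_iff_norm]
              exact hφs _ fun h => hy (by simp [loc, h])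
            have hh := h t ht b S hb hB p.2 p.1 _ _ (loc_cc hφ hu p.1) (loc_cc hφ hw p.2)
              (hloc u p.1) (hloc w p.2)
            have hp := hW_pos (p.2 - p.1)
            have na := n2_nonneg (loc φ u p.1)
            have nb := n2_nonneg (loc φ w p.2)
            rw [← ENNReal.ofReal_mul hp.le, ← ENNReal.ofReal_mul hp.le,
              ← ENNReal.ofReal_mul (by positivity), ← ENNReal.ofReal_mul (by positivity),
              ← ENNReal.ofReal_add (by positivity) (by positivity), ← ofReal_norm]
            apply ENNReal.ofReal_le_ofReal
            refine hh.trans ?_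
            have e : √(n2 (loc φ u p.1)) * √(n2 (loc φ w p.2)) ≤
              l * n2 (loc φ u p.1) + l⁻¹ * n2 (loc φ w p.2) := by
              set a := n2 (loc φ u p.1)
              set c := n2 (loc φ w p.2)
              have ea := Real.sq_sqrt na
              have ec := Real.sq_sqrt nb
              have pos : 0 ≤ √l⁻¹ := Real.sqrt_nonneg _
              have el := Real.sq_sqrt hl.le
              have eli := Real.sq_sqrt (inv_pos.2 hl).le
              have e1 : √l * √l⁻¹ = 1 := by
                rw [← Real.sqrt_mul hl.le, mul_inv_cancel₀ hl.ne', Real.sqrt_one]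
              have := sq_nonneg (√l * √a - √l⁻¹ * √c)
              have e3 : (√l * √a - √l⁻¹ * √c)^2 = l * a + l⁻¹ * c - 2 * (√l * √l⁻¹) * (√a * √c) := by
                calc _ = √l ^ 2 * √a ^ 2 + √l⁻¹ ^ 2 * √c ^ 2 - 2 * (√l * √l⁻¹) * (√a * √c) := by ring
                  _ = _ := by rw [ea, ec, el, eli]
              rw [e1] at e3
              have : 0 ≤ √a * √c := by positivity
              linarith
            calc _ ≤ C * S * hW (p.2 - p.1) * (l * n2 (loc φ u p.1) + l⁻¹ * n2 (loc φ w p.2)) := by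
                  gcongr
              _ = _ := by ring
        _ = _ := by
            have m1 := loc_meas hu hφ
            have m2 := loc_meas hw hφ
            have m3 : Measurable fun p : V × V => ENNReal.ofReal (hW (p.2 - p.1)) :=
              hWm.comp (measurable_snd.sub measurable_fst)
            have m4 : Measurable fun p : V × V => ENNReal.ofReal (C * S * l) *
                (ENNReal.ofReal (hW (p.2 - p.1)) * ENNReal.ofReal (n2 (loc φ u p.1))) :=
              (m3.mul (m1.comp measurable_fst)).const_mul _
            rw [lintegral_add_left m4, lintegral_const_mul' _ _ ENNReal.ofReal_ne_top,
              lintegral_const_mul' _ _ ENNReal.ofReal_ne_top,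
              conv1 hWm m1, conv2 hWm m2, loc_sq hu hφ, loc_sq hw hφ, hI,
              ← ENNReal.ofReal_mul (by positivity), ← ENNReal.ofReal_mul (by positivity),
              ← ENNReal.ofReal_mul (by positivity), ← ENNReal.ofReal_mul (by positivity),
              ← ENNReal.ofReal_add (by positivity) (by positivity)]
            congr 1; ring
    rwa [← ofReal_norm, ENNReal.ofReal_le_ofReal_iff (by positivity)] at this
  have := amgm_opt (by positivity) (n2_nonneg u) (n2_nonneg w) key
  refine this.trans ?_
  have e : 2 * (C * S * I * n2 φ) ≤ 2 * (C * I * n2 φ + 1) * S := by linarith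
  gcongr
end CVS

section Dual
variable {V : Type*} [NormedAddCommGroup V] [InnerProductSpace ℝ V] [FiniteDimensional ℝ V]
  [MeasurableSpace V] [BorelSpace V]

open FourierTransform Module ComplexConjugate

theorem fatou_le {X : Type*} [MeasurableSpace X] {μ : Measure X} {F : ℕ → X → ENNReal}
    {G : X → ENNReal} {C : ENNReal} (hF : ∀ k, Measurable (F k))
    (hG : ∀ x, G x ≤ Filter.liminf (fun k => F k x) Filter.atTop)
    (hC : ∀ k, ∫⁻ x, F k x ∂μ ≤ C) : ∫⁻ x, G x ∂μ ≤ C := by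
  refine (lintegral_mono hG).trans ((lintegral_liminf_le hF).trans ?_)
  refine (Filter.liminf_le_liminf (Filter.Eventually.of_forall hC)).trans ?_
  simp

/-- the operator -/
def TT (t : ℝ) (b : V × V → ℂ) (v : V → ℂ) (x : V) : ℂ :=
  ∫ ξ, ∫ y, b (t • x + (1 - t) • y, ξ) * ee (inner ℝ ξ (x - y)) * v y

theorem TT_eq {t : ℝ} {b : V × V → ℂ} {v : V → ℂ} (hb : CcV b) (hv : CcV v) (x : V) :
    TT t b v x = ∫ p in ((Prod.snd '' tsupport b) ×ˢ tsupport v),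
      b (t • x + (1 - t) • p.2, p.1) * ee (inner ℝ p.1 (x - p.2)) * v p.2 := by
  have cb := hb.1.continuous
  have cv := hv.1.continuous
  have hK : IsCompact ((Prod.snd '' tsupport b) ×ˢ tsupport v) :=
    (hb.2.isCompact.image continuous_snd).prod hv.2.isCompact
  have hs : ∀ p : V × V, b (t • x + (1 - t) • p.2, p.1) * ee (inner ℝ p.1 (x - p.2)) * v p.2 ≠ 0 →
      p ∈ (Prod.snd '' tsupport b) ×ˢ tsupport v := by
    intro p hp
    refine ⟨⟨_, subset_tsupport b (a := (t • x + (1 - t) • p.2, p.1)) ?_, rfl⟩, subset_tsupport v ?_⟩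
    · intro h; apply hp; simp [h]
    · intro h; apply hp; simp [h]
  rw [setIntegral_eq_integral_of_forall_compl_eq_zero]
  · unfold TT
    rw [show (volume : Measure (V × V)) = volume.prod volume from rfl, integral_prod]
    apply Continuous.integrable_of_hasCompactSupport (by fun_prop)
    exact HasCompactSupport.of_support_subset_isCompact hK hs
  · intro p hp
    by_contra h
    exact hp (hs p h)

theorem TT_continuous {t : ℝ} {b : V × V → ℂ} {v : V → ℂ} (hb : CcV b) (hv : CcV v) :
    Continuous (TT t b v) := by
  have cb := hb.1.continuous
  have cv := hv.1.continuous
  have hK : IsCompact ((Prod.snd '' tsupport b) ×ˢ tsupport v) :=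
    (hb.2.isCompact.image continuous_snd).prod hv.2.isCompact
  rw [funext (TT_eq (t := t) hb hv)]
  apply continuous_parametric_integral_of_continuous _ hK
  unfold Function.uncurry
  fun_prop

theorem BF_eq_TT {t : ℝ} {b : V × V → ℂ} {v w : V → ℂ} (hb : CcV b) (hv : CcV v) (hw : CcV w) :
    BF t b v w = ∫ x, TT t b v x * conj (w x) := by
  have hi := KF_integrable (t := t) hb hv hw
  have c1 := KF_continuous (t := t) hb.1.continuous hv.1.continuous hw.1.continuous
  have h1 : BF t b v w = ∫ ξ, ∫ x, ∫ y, KF t b v w (ξ, x, y) := by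
    unfold BF
    rw [show (volume : Measure (V × V × V)) = volume.prod volume from rfl, integral_prod _ hi]
    congr 1; ext ξ
    rw [show (volume : Measure (V × V)) = volume.prod volume from rfl, integral_prod]
    apply Continuous.integrable_of_hasCompactSupport (by fun_prop)
    refine HasCompactSupport.of_support_subset_isCompact (hw.2.isCompact.prod hv.2.isCompact) ?_
    intro p hp
    refine ⟨subset_tsupport w ?_, subset_tsupport v ?_⟩
    · intro h; apply hp; simp [KF, h]
    · intro h; apply hp; simp [KF, h]
  rw [h1, integral_integral_swap]
  · congr 1; ext x
    unfold TT
    rw [← integral_mul_const]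
    congr 1; ext ξ
    rw [← integral_mul_const]
    rfl
  · have h2 : Integrable (fun q : (V × V) × V => KF t b v w (q.1.1, q.1.2, q.2)) := by
      apply Continuous.integrable_of_hasCompactSupport (by fun_prop)
      exact (KF_compact hb.2 hv.2 hw.2).comp_homeomorph (Homeomorph.prodAssoc V V V)
    exact h2.integral_prod_left

theorem pair_cont {T : V → ℂ} (hT : Continuous T) {P : V → Prop} {M : ℝ}
    (h : ∀ w, CcV w → (∀ x, w x ≠ 0 → P x) → ‖∫ x, T x * conj (w x)‖ ≤ M * √(n2 w))
    {w : V → ℂ} (hw : Continuous w) (hwc : HasCompactSupport w) (hws : ∀ x, w x ≠ 0 → P x) :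
    ‖∫ x, T x * conj (w x)‖ ≤ M * √(n2 w) := by
  have happ : ∀ k : ℕ, ∃ g : V → ℂ, Sm g ∧ (∀ x, dist (g x) (w x) < 1 / ((k:ℝ) + 1)) ∧
      Function.support g ⊆ Function.support w := by
    intro k
    obtain ⟨g, h1, h2, h3⟩ := hw.exists_contDiff_approx ⊤ (ε := fun _ => 1 / ((k:ℝ) + 1))
      continuous_const (fun _ => by positivity)
    exact ⟨g, h1, h2, h3⟩
  choose g hg1 hg2 hg3 using happ
  set K := tsupport w
  have hK : IsCompact K := hwc
  have hgw : ∀ k x, x ∉ K → g k x = 0 := by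
    intro k x hx
    by_contra hne
    exact hx (subset_tsupport w (hg3 k hne))
  have hcc : ∀ k, CcV (g k) := fun k => ⟨hg1 k,
    HasCompactSupport.of_support_subset_isCompact hK ((hg3 k).trans (subset_tsupport w))⟩
  have hlim : ∀ x, Filter.Tendsto (fun k => g k x) Filter.atTop (nhds (w x)) := by
    intro x
    rw [tendsto_iff_dist_tendsto_zero]
    refine squeeze_zero (fun _ => dist_nonneg) (fun k => (hg2 k x).le) ?_
    exact tendsto_one_div_add_atTop_nhds_zero_nat
  have hbd : ∀ k x, ‖g k x‖ ≤ ‖w x‖ + 1 := by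
    intro k x
    have h1 := hg2 k x
    rw [dist_eq_norm] at h1
    have h2 : 1 / ((k:ℝ) + 1) ≤ 1 := by
      rw [div_le_one (by positivity)]; linarith [(Nat.cast_nonneg k : (0:ℝ) ≤ k)]
    have := norm_le_norm_add_norm_sub' (g k x) (w x)
    linarith
  have l1 : Filter.Tendsto (fun k => ∫ x, T x * conj (g k x)) Filter.atTop
      (nhds (∫ x, T x * conj (w x))) := by
    apply tendsto_integral_of_dominated_convergence
      (K.indicator fun x => ‖T x‖ * (‖w x‖ + 1))
    · intro k
      have := (hg1 k).continuous
      exact Continuous.aestronglyMeasurable (by fun_prop)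
    · rw [integrable_indicator_iff hK.measurableSet]
      exact ContinuousOn.integrableOn_compact hK (by fun_prop)
    · intro k
      refine ae_of_all _ fun x => ?_
      by_cases hx : x ∈ K
      · simp only [hx, Set.indicator_of_mem, norm_mul, RCLike.norm_conj]
        gcongr
        exact hbd k x
      · simp [hx, hgw k x hx]
    · refine ae_of_all _ fun x => ?_
      exact ((Complex.continuous_conj.tendsto _).comp (hlim x)).const_mul _
  have l2 : Filter.Tendsto (fun k => n2 (g k)) Filter.atTop (nhds (n2 w)) := by
    apply tendsto_integral_of_dominated_convergence
      (K.indicator fun x => (‖w x‖ + 1) ^ 2)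
    · intro k
      have := (hg1 k).continuous
      exact Continuous.aestronglyMeasurable (by fun_prop)
    · rw [integrable_indicator_iff hK.measurableSet]
      exact ContinuousOn.integrableOn_compact hK (by fun_prop)
    · intro k
      refine ae_of_all _ fun x => ?_
      by_cases hx : x ∈ K
      · simp only [hx, Set.indicator_of_mem, norm_pow, norm_norm]
        gcongr
        exact hbd k x
      · simp [hx, hgw k x hx]
    · refine ae_of_all _ fun x => ?_
      exact ((hlim x).norm).pow 2
  exact le_of_tendsto_of_tendsto' l1.norm (((Real.continuous_sqrt.tendsto _).comp l2).const_mul M)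
    fun k => h (g k) (hcc k) fun x hx => hws x (hg3 k hx)

theorem dual_bound {T : V → ℂ} (hT : Continuous T) {P : V → Prop} {M : ℝ} (hM : 0 ≤ M)
    (h : ∀ w, CcV w → (∀ x, w x ≠ 0 → P x) → ‖∫ x, T x * conj (w x)‖ ≤ M * √(n2 w))
    {ζ : V → ℝ} (hζ : Continuous ζ) {B : ℝ} (hB : 0 ≤ B) (hζB : ∀ x, |ζ x| ≤ B)
    (hζP : ∀ x, ζ x ≠ 0 → P x) :
    ∫⁻ x, ‖(ζ x : ℂ) * T x‖ₑ ^ 2 ≤ ENNReal.ofReal ((B * M) ^ 2) := by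
  let χ : ℕ → ContDiffBump (0 : V) := fun k => ⟨k + 1, k + 2, by positivity, by linarith⟩
  apply fatou_le (F := fun k x => ‖((χ k x * ζ x : ℝ) : ℂ) * T x‖ₑ ^ 2)
  · intro k
    have := (χ k).continuous
    apply Continuous.measurable
    fun_prop
  · intro x
    have : ∀ᶠ k : ℕ in Filter.atTop, ‖(ζ x : ℂ) * T x‖ₑ ^ 2 ≤
        ‖((χ k x * ζ x : ℝ) : ℂ) * T x‖ₑ ^ 2 := by
      filter_upwards [Filter.eventually_ge_atTop ⌈‖x‖⌉₊] with k hk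
      have h1 : χ k x = 1 := by
        apply (χ k).one_of_mem_closedBall
        rw [mem_closedBall_zero_iff]
        change ‖x‖ ≤ (k:ℝ) + 1
        have := (Nat.le_ceil ‖x‖).trans (Nat.cast_le.2 hk)
        linarith
      rw [h1, one_mul]
    exact Filter.le_liminf_of_le (by isBoundedDefault) this
  · intro k
    set η : V → ℝ := fun x => χ k x * ζ x with hη
    have hχc := (χ k).continuous
    have hηc : Continuous η := by fun_prop
    have hηs : HasCompactSupport η := (χ k).hasCompactSupport.mul_right
    have hηB : ∀ x, |η x| ≤ B := by
      intro x
      rw [hη, abs_mul, abs_of_nonneg (χ k).nonneg]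
      calc _ ≤ 1 * B := mul_le_mul (χ k).le_one (hζB x) (abs_nonneg _) zero_le_one
        _ = B := one_mul B
    have hηP : ∀ x, η x ≠ 0 → P x := fun x hx => hζP x fun h => hx (by simp [hη, h])
    set w : V → ℂ := fun x => ((η x : ℝ) : ℂ) ^ 2 * T x with hw
    set g : V → ℂ := fun x => ((η x : ℝ) : ℂ) * T x with hg
    have hηs' : HasCompactSupport fun x => ((η x : ℝ) : ℂ) :=
      hηs.comp_left (g := Complex.ofReal) (by simp)
    have hwc : Continuous w := by fun_prop
    have hgc : Continuous g := by fun_prop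
    have hws : HasCompactSupport w := by
      have : w = fun x => ((η x : ℝ) : ℂ) * g x := by ext x; simp only [hw, hg]; ring
      rw [this]; exact hηs'.mul_right
    have hgs : HasCompactSupport g := hηs'.mul_right
    have hp := pair_cont hT h hwc hws fun x hx => hηP x fun h => hx (by simp [hw, h])
    have e1 : ∫ x, T x * conj (w x) = ((n2 g : ℝ) : ℂ) := by
      rw [n2, ← integral_complex_ofReal]
      congr 1; ext x
      simp only [hw, hg, map_mul, map_pow, Complex.conj_ofReal, norm_mul, Complex.norm_real,
        Real.norm_eq_abs, mul_pow, sq_abs]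
      push_cast
      rw [← Complex.mul_conj']
      ring
    have iG : Integrable fun x => ‖g x‖ ^ 2 := by
      apply Continuous.integrable_of_hasCompactSupport (by fun_prop)
      exact (hgs.norm).comp_left (g := fun x : ℝ => x ^ 2) (by simp)
    have iW : Integrable fun x => ‖w x‖ ^ 2 := by
      apply Continuous.integrable_of_hasCompactSupport (by fun_prop)
      exact (hws.norm).comp_left (g := fun x : ℝ => x ^ 2) (by simp)
    have e2 : n2 w ≤ B ^ 2 * n2 g := by
      rw [n2, n2, ← integral_const_mul]
      apply integral_mono iW (iG.const_mul _)
      intro x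
      have : w x = ((η x : ℝ) : ℂ) * g x := by simp only [hw, hg]; ring
      simp only [this, norm_mul, Complex.norm_real, Real.norm_eq_abs, mul_pow]
      gcongr
      exact hηB x
    have hg0 := n2_nonneg g
    rw [e1, Complex.norm_real, Real.norm_of_nonneg hg0] at hp
    have e3 : n2 g ≤ M * (B * √(n2 g)) := by
      refine hp.trans ?_
      gcongr
      refine (Real.sqrt_le_sqrt e2).trans ?_
      rw [Real.sqrt_mul (by positivity), Real.sqrt_sq hB]
    have e4 : n2 g ≤ (B * M) ^ 2 := by
      have s := Real.sq_sqrt hg0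
      set r := √(n2 g)
      have hr : 0 ≤ r := Real.sqrt_nonneg _
      rw [← s] at e3 ⊢
      rcases hr.eq_or_lt with h0 | h0
      · rw [← h0, zero_pow two_ne_zero]; positivity
      · have : r ≤ B * M := by
          by_contra hc
          push Not at hc
          nlinarith
        gcongr
    calc _ = ENNReal.ofReal (n2 g) := by
          rw [n2, ofReal_integral_eq_lintegral_ofReal iG (ae_of_all _ fun _ => by positivity)]
          congr 1; ext x
          rw [← ofReal_norm, ENNReal.ofReal_pow (norm_nonneg _)]
      _ ≤ _ := ENNReal.ofReal_le_ofReal e4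

theorem op_bound (V : Type*) [NormedAddCommGroup V] [InnerProductSpace ℝ V]
    [FiniteDimensional ℝ V] [MeasurableSpace V] [BorelSpace V] (M : ℕ) :
    ∃ C > 0, ∃ n : ℕ, ∀ t ∈ Set.Icc (0:ℝ) 1, ∀ (b : V × V → ℂ) (S : ℝ), CcV b → Bd n b S →
    ∀ (e : V) (α β : ℝ), ‖e‖ ≤ 1 → ∀ v, CcV v → (∀ y, v y ≠ 0 → |inner ℝ e y - β| ≤ 1) →
    ∀ (ζ : V → ℝ) (B : ℝ), Continuous ζ → 0 ≤ B → (∀ x, |ζ x| ≤ B) →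
      (∀ x, ζ x ≠ 0 → |inner ℝ e x - α| ≤ 1) →
    ∫⁻ x, ‖(ζ x : ℂ) * TT t b v x‖ₑ ^ 2 ≤
      ENNReal.ofReal ((B * (C * S * ((1 + |α - β|) ^ M)⁻¹ * √(n2 v))) ^ 2) := by
  obtain ⟨C, hC, h⟩ := cv_bound V
  refine ⟨2 ^ M * (1 + 3 ^ M) * C, by positivity, 2 * (finrank ℝ V + 1) + M, ?_⟩
  intro t ht b S hb hBd e α β he v hv hvs ζ B hζ hB hζB hζs
  have hS := hBd.nonneg
  refine dual_bound (TT_continuous hb hv) (P := fun x => |inner ℝ e x - α| ≤ 1) (by positivity)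
    ?_ hζ hB hζB hζs
  intro w hw hws
  rw [← BF_eq_TT hb hv hw]
  have g0 : GB t (fun y : V => |inner ℝ e y - β| ≤ 1) (fun x : V => |inner ℝ e x - α| ≤ 1) 1
      (2 * (finrank ℝ V + 1)) C := fun b S hb hB u w hu hw _ _ =>
    h t ht b S hb hB u w hu hw (fun _ _ => trivial) (fun _ _ => trivial)
  have g1 := g0.pow zero_le_one hC.le he (fun _ h => h) (fun _ h => h) M b S hb hBd v w hv hw hvs hws
  have g2 := g0 b S hb (hBd.mono (by omega)) v w hv hw hvs hws
  have hx := abs_nonneg (α - β)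
  set x := |α - β|
  have hp : (1 + x) ^ M ≤ 2 ^ M * (1 + x ^ M) := by
    have h1 := add_pow_le (zero_le_one (α := ℝ)) hx M
    have h2 : (2:ℝ)^(M-1) ≤ 2 ^ M := by gcongr <;> norm_num
    rw [one_pow] at h1
    refine h1.trans ?_
    gcongr
  have key : (1 + x) ^ M * ‖BF t b v w‖ ≤ 2 ^ M * (1 + 3 ^ M) * C * S * √(n2 v) * √(n2 w) := by
    calc _ ≤ 2 ^ M * (1 + x ^ M) * ‖BF t b v w‖ := by gcongr
      _ = 2 ^ M * (1 * ‖BF t b v w‖ + x ^ M * 1 * ‖BF t b v w‖) := by ring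
      _ ≤ 2 ^ M * (C * S * √(n2 v) * √(n2 w) + 3 ^ M * C * S * √(n2 v) * √(n2 w)) := by gcongr
      _ = _ := by ring
  have hpos : 0 < (1 + x) ^ M := by positivity
  rw [mul_comm, ← le_div_iff₀ hpos] at key
  refine key.trans (le_of_eq ?_)
  rw [div_eq_mul_inv]; ring
end Dual

section Words
variable {d : ℕ}

/-- standard directions on phase space -/
def ED (d : ℕ) : (Option (Fin d) ⊕ Option (Fin d)) → Q d × Q d
  | .inl none => (eR d, 0)
  | .inl (some i) => (eTh d i, 0)
  | .inr none => (0, eR d)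
  | .inr (some i) => (0, eTh d i)

/-- coordinates -/
def EDc (d : ℕ) : (Option (Fin d) ⊕ Option (Fin d)) → (Q d × Q d →L[ℝ] ℝ)
  | .inl none => (ContinuousLinearMap.fst ℝ _ _).comp (ContinuousLinearMap.fst ℝ _ _)
  | .inl (some i) => (ContinuousLinearMap.proj (R := ℝ) (φ := fun _ : Fin d => ℝ) i).comp
      ((ContinuousLinearMap.snd ℝ _ _).comp (ContinuousLinearMap.fst ℝ _ _))
  | .inr none => (ContinuousLinearMap.fst ℝ _ _).comp (ContinuousLinearMap.snd ℝ _ _)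
  | .inr (some i) => (ContinuousLinearMap.proj (R := ℝ) (φ := fun _ : Fin d => ℝ) i).comp
      ((ContinuousLinearMap.snd ℝ _ _).comp (ContinuousLinearMap.snd ℝ _ _))

theorem EDc_norm (j) : ‖EDc d j‖ ≤ 1 := by
  refine ContinuousLinearMap.opNorm_le_bound _ zero_le_one fun z => ?_
  rw [one_mul]
  have h1 : ‖z.1‖ ≤ ‖z‖ := norm_fst_le z
  have h2 : ‖z.2‖ ≤ ‖z‖ := norm_snd_le z
  rcases j with (_ | i) | (_ | i)
  · exact (norm_fst_le z.1).trans h1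
  · exact (norm_le_pi_norm z.1.2 i).trans ((norm_snd_le z.1).trans h1)
  · exact (norm_fst_le z.2).trans h2
  · exact (norm_le_pi_norm z.2.2 i).trans ((norm_snd_le z.2).trans h2)

theorem ED_sum (z : Q d × Q d) : z = ∑ j, EDc d j z • ED d j := by
  simp only [Fintype.sum_sum_type, Fintype.sum_option, EDc, ED]
  ext i <;> simp [eR, eTh, Prod.fst_sum, Prod.snd_sum, Finset.sum_apply, Pi.single_apply]

theorem fderiv_ED (g : Q d × Q d → ℂ) (z : Q d × Q d) :
    fderiv ℝ g z = ∑ j, (EDc d j).smulRight (dirD (ED d j) g z) := by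
  refine ContinuousLinearMap.ext fun v => ?_
  conv_lhs => rw [ED_sum v]
  simp [dirD]

theorem Sm.dirD {E : Type*} [NormedAddCommGroup E] [NormedSpace ℝ E] {b : E → ℂ} (hb : Sm b)
    (v : E) : Sm (dirD v b) := hb.fder v

/-- iterated directional derivatives -/
def wordD (w : List (Option (Fin d) ⊕ Option (Fin d))) (g : Q d × Q d → ℂ) : Q d × Q d → ℂ :=
  w.foldr (fun j h => dirD (ED d j) h) g

theorem words_bound (i : ℕ) : ∀ (g : Q d × Q d → ℂ), Sm g → ∀ (z : Q d × Q d) (S : ℝ),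
    (∀ w : List (Option (Fin d) ⊕ Option (Fin d)), w.length = i → ‖wordD w g z‖ ≤ S) →
    ‖iteratedFDeriv ℝ i g z‖ ≤ (Fintype.card (Option (Fin d) ⊕ Option (Fin d)) : ℝ) ^ i * S := by
  induction i with
  | zero =>
    intro g hg z S h
    simpa [wordD] using h [] rfl
  | succ i ih =>
    intro g hg z S h
    rw [← norm_iteratedFDeriv_fderiv, funext (fderiv_ED g)]
    have hs : ∀ j ∈ (Finset.univ : Finset (Option (Fin d) ⊕ Option (Fin d))), ContDiffAt ℝ i
        (fun x => (EDc d j).smulRight (dirD (ED d j) g x)) z := by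
      intro j _
      have h1 : ContDiff ℝ i (dirD (ED d j) g) :=
        (hg.dirD (ED d j)).of_le (by exact_mod_cast le_top)
      exact (((ContinuousLinearMap.smulRightL ℝ _ ℂ (EDc d j)).contDiff).comp h1).contDiffAt
    have e : iteratedFDeriv ℝ i (fun x => ∑ j, (EDc d j).smulRight (dirD (ED d j) g x)) z =
        ∑ j, iteratedFDeriv ℝ i (fun x => (EDc d j).smulRight (dirD (ED d j) g x)) z := by
      exact iteratedFDeriv_fun_sum_apply hs
    rw [e]
    refine (norm_sum_le _ _).trans ?_
    have hj : ∀ j, ‖iteratedFDeriv ℝ i (fun x => (EDc d j).smulRight (dirD (ED d j) g x)) z‖ ≤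
        (Fintype.card (Option (Fin d) ⊕ Option (Fin d)) : ℝ) ^ i * S := by
      intro j
      have h1 : ContDiff ℝ i (dirD (ED d j) g) :=
        (hg.dirD (ED d j)).of_le (by exact_mod_cast le_top)
      have h2 := ih _ (hg.dirD (ED d j)) z S (by
        intro w hw
        have := h (w ++ [j]) (by simp [hw])
        simpa [wordD] using this)
      refine le_trans ?_ h2
      refine (ContinuousLinearMap.norm_iteratedFDeriv_comp_left
        (ContinuousLinearMap.smulRightL ℝ (Q d × Q d) ℂ (EDc d j)) h1.contDiffAt le_rfl).trans ?_
      have h3 : ‖ContinuousLinearMap.smulRightL ℝ (Q d × Q d) ℂ (EDc d j)‖ ≤ 1 := by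
        refine ContinuousLinearMap.opNorm_le_bound _ zero_le_one fun c => ?_
        rw [ContinuousLinearMap.smulRightL_apply_apply, ContinuousLinearMap.norm_smulRight_apply]
        gcongr
        exact EDc_norm j
      exact mul_le_of_le_one_left (norm_nonneg _) h3
    refine (Finset.sum_le_sum fun j _ => hj j).trans ?_
    rw [Finset.sum_const, Finset.card_univ, nsmul_eq_mul, pow_succ']
    rw [mul_assoc]

section comm
variable {E : Type*} [NormedAddCommGroup E] [NormedSpace ℝ E]

theorem dirD_comm {g : E → ℂ} (hg : Sm g) (v w : E) : dirD v (dirD w g) = dirD w (dirD v g) := by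
  ext x
  have h2 : ContDiffAt ℝ 2 g x :=
    (hg.of_le (m := ((2:ℕ∞):WithTop ℕ∞)) (by exact_mod_cast le_top)).contDiffAt
  have hsym := h2.isSymmSndFDerivAt (by simp)
  have hd : DifferentiableAt ℝ (fderiv ℝ g) x :=
    ((hg.fderiv_right (m := 1) (by norm_cast)).differentiable (by simp)).differentiableAt
  have e : ∀ v w : E, dirD v (dirD w g) x = fderiv ℝ (fderiv ℝ g) x v w := by
    intro v w
    unfold dirD
    rw [fderiv_clm_apply hd (differentiableAt_const w)]
    simp
  rw [e, e]; exact hsym.eq v w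

theorem Sm.iter {g : E → ℂ} (hg : Sm g) (v : E) (n : ℕ) : Sm ((_root_.dirD v)^[n] g) := by
  induction n with
  | zero => exact hg
  | succ n ih => rw [Function.iterate_succ_apply']; exact ih.dirD v

theorem dirD_iter_comm {g : E → ℂ} (hg : Sm g) (v w : E) (n : ℕ) :
    dirD v ((dirD w)^[n] g) = (dirD w)^[n] (dirD v g) := by
  induction n with
  | zero => rfl
  | succ n ih =>
    rw [Function.iterate_succ_apply', Function.iterate_succ_apply', ← ih, dirD_comm (hg.iter w n)]

/-- fold of iterated derivatives -/
def fol (e : Fin d → E) (l : List (Fin d)) (m : Fin d → ℕ) (g : E → ℂ) : E → ℂ :=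
  l.foldr (fun i h => (dirD (e i))^[m i] h) g

theorem Sm.fol {g : E → ℂ} (hg : Sm g) (e : Fin d → E) (l : List (Fin d)) (m : Fin d → ℕ) :
    Sm (fol e l m g) := by
  induction l with
  | nil => exact hg
  | cons i l ih => exact Sm.iter ih _ _

theorem dirD_fol_comm {g : E → ℂ} (hg : Sm g) (e : Fin d → E) (l : List (Fin d)) (m : Fin d → ℕ)
    (v : E) : dirD v (fol e l m g) = fol e l m (dirD v g) := by
  induction l with
  | nil => rfl
  | cons i l ih =>
    change dirD v ((dirD (e i))^[m i] (fol e l m g)) = (dirD (e i))^[m i] (fol e l m (dirD v g))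
    rw [dirD_iter_comm (hg.fol e l m), ih]

theorem fol_congr (e : Fin d → E) (l : List (Fin d)) {m m' : Fin d → ℕ} (g : E → ℂ)
    (h : ∀ i ∈ l, m i = m' i) : fol e l m g = fol e l m' g := by
  induction l with
  | nil => rfl
  | cons i l ih =>
    change (dirD (e i))^[m i] (fol e l m g) = (dirD (e i))^[m' i] (fol e l m' g)
    rw [ih fun i hi => h i (by simp [hi]), h i (by simp)]

theorem dirD_fol_mem {g : E → ℂ} (hg : Sm g) (e : Fin d → E) (l : List (Fin d)) (hl : l.Nodup)
    (m : Fin d → ℕ) (i : Fin d) (hi : i ∈ l) :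
    dirD (e i) (fol e l m g) = fol e l (m + Pi.single i 1) g := by
  induction l with
  | nil => simp at hi
  | cons k l ih =>
    change dirD (e i) ((dirD (e k))^[m k] (fol e l m g)) =
      (dirD (e k))^[(m + (Pi.single i 1 : Fin d → ℕ)) k] (fol e l (m + Pi.single i 1) g)
    rw [List.nodup_cons] at hl
    by_cases hk : i = k
    · subst hk
      rw [← Function.iterate_succ_apply' (dirD (e i))]
      have : fol e l (m + Pi.single i 1) g = fol e l m g := by
        apply fol_congr
        intro j hj
        have : j ≠ i := fun h => hl.1 (h ▸ hj)
        simp [this]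
      rw [this]; simp
    · have hi' : i ∈ l := by simpa [hk] using hi
      rw [dirD_iter_comm (hg.fol e l m), ih hl.2 hi']
      have : (m + (Pi.single i 1 : Fin d → ℕ)) k = m k := by
        simp [Ne.symm hk]
      rw [this]
end comm

theorem mderiv2_eq (α β : MIdx d) (g : Q d × Q d → ℂ) : mderiv2 α β g =
    (dirD ((eR d, 0) : Q d × Q d))^[α.1] (fol (fun i => ((eTh d i, 0) : Q d × Q d))
      (List.finRange d) α.2 ((dirD (((0 : Q d), eR d) : Q d × Q d))^[β.1]
      (fol (fun i => (((0 : Q d), eTh d i) : Q d × Q d)) (List.finRange d) β.2 g))) := rfl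

/-- multiindex unit -/
def uIdx (d : ℕ) : Option (Fin d) → MIdx d
  | none => (1, 0)
  | some i => (0, Pi.single i 1)

/-- counts -/
def cntA (w : List (Option (Fin d) ⊕ Option (Fin d))) : MIdx d × MIdx d :=
  w.foldr (fun j m => match j with
    | .inl o => (m.1 + uIdx d o, m.2)
    | .inr o => (m.1, m.2 + uIdx d o)) 0

theorem dirD_mderiv2 {g : Q d × Q d → ℂ} (hg : Sm g) (α β : MIdx d) :
    (∀ o, dirD (ED d (.inl o)) (mderiv2 α β g) = mderiv2 (α + uIdx d o) β g) ∧
    (∀ o, dirD (ED d (.inr o)) (mderiv2 α β g) = mderiv2 α (β + uIdx d o) g) := by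
  have s1 := hg.fol (fun i => (((0 : Q d), eTh d i) : Q d × Q d)) (List.finRange d) β.2
  have s2 := s1.iter (((0 : Q d), eR d) : Q d × Q d) β.1
  have s3 := s2.fol (fun i => ((eTh d i, 0) : Q d × Q d)) (List.finRange d) α.2
  constructor
  · rintro (_ | i)
    · simp only [mderiv2_eq, ED, uIdx]
      rw [← Function.iterate_succ_apply' (dirD ((eR d, 0) : Q d × Q d))]
      simp
    · simp only [mderiv2_eq, ED, uIdx]
      rw [dirD_iter_comm s3]
      have := dirD_fol_mem s2 (fun i => ((eTh d i, 0) : Q d × Q d)) (List.finRange d)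
        (List.nodup_finRange d) α.2 i (by simp)
      rw [this]
      simp
  · rintro (_ | i)
    · simp only [mderiv2_eq, ED, uIdx]
      rw [dirD_iter_comm s3, dirD_fol_comm s2,
        ← Function.iterate_succ_apply' (dirD ((0, eR d) : Q d × Q d))]
      simp
    · simp only [mderiv2_eq, ED, uIdx]
      rw [dirD_iter_comm s3, dirD_fol_comm s2, dirD_iter_comm s1]
      have := dirD_fol_mem hg (fun i => ((0, eTh d i) : Q d × Q d)) (List.finRange d)
        (List.nodup_finRange d) β.2 i (by simp)
      rw [this]
      simp

theorem wordD_eq {g : Q d × Q d → ℂ} (hg : Sm g) (w : List (Option (Fin d) ⊕ Option (Fin d))) :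
    wordD w g = mderiv2 (cntA w).1 (cntA w).2 g := by
  induction w with
  | nil =>
    change g = mderiv2 0 0 g
    rw [mderiv2_eq]
    have : ∀ (e : Fin d → Q d × Q d) (l : List (Fin d)), fol e l 0 g = g := by
      intro e l
      induction l with
      | nil => rfl
      | cons i l ih => exact ih
    change g = fol _ _ 0 (fol _ _ 0 g)
    rw [this, this]
  | cons j w ih =>
    change dirD (ED d j) (wordD w g) = _
    rw [ih]
    rcases j with o | o
    · rw [(dirD_mderiv2 hg _ _).1]; rfl
    · rw [(dirD_mderiv2 hg _ _).2]; rfl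

theorem deg_add (α β : MIdx d) : deg (α + β) = deg α + deg β := by
  simp [deg, Finset.sum_add_distrib]; ring

theorem degA_add (α β : MIdx d) : degA (α + β) = degA α + degA β := by
  simp [degA, Finset.sum_add_distrib]

theorem deg_u (o : Option (Fin d)) : deg (uIdx d o) = 1 := by
  rcases o with _ | i <;> simp [deg, uIdx]

theorem deg_cnt (w : List (Option (Fin d) ⊕ Option (Fin d))) :
    deg (cntA w).1 + deg (cntA w).2 = w.length := by
  induction w with
  | nil => simp [cntA, deg]
  | cons j w ih =>
    rcases j with o | o
    · change deg ((cntA w).1 + uIdx d o) + deg (cntA w).2 = _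
      rw [deg_add, deg_u, List.length_cons, ← ih]; ring
    · change deg (cntA w).1 + deg ((cntA w).2 + uIdx d o) = _
      rw [deg_add, deg_u, List.length_cons, ← ih]; ring

/-- anisotropic scaling -/
def Asc (d : ℕ) (s m : ℝ) : Q d →L[ℝ] Q d :=
  (s • ContinuousLinearMap.id ℝ ℝ).prodMap (m • ContinuousLinearMap.id ℝ (Fin d → ℝ))

theorem Asc_apply (s m : ℝ) (q : Q d) : Asc d s m q = (s * q.1, m • q.2) := rfl

/-- scaling of phase space -/
def Lsc (d : ℕ) (lam h : ℝ) : Q d × Q d →L[ℝ] Q d × Q d :=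
  (Asc d 1 lam⁻¹).prodMap (Asc d h (h * lam))

/-- scaling constants -/
def cst (d : ℕ) (lam h : ℝ) : (Option (Fin d) ⊕ Option (Fin d)) → ℝ
  | .inl none => 1
  | .inl (some _) => lam⁻¹
  | .inr none => h
  | .inr (some _) => h * lam

theorem Lsc_ED (lam h : ℝ) (j) : Lsc d lam h (ED d j) = cst d lam h j • ED d j := by
  rcases j with (_ | i) | (_ | i) <;>
  · ext k <;> simp [Lsc, Asc, ED, cst, eR, eTh]

theorem dirD_Lsc {g : Q d × Q d → ℂ} (hg : Sm g) (lam h : ℝ) (j) :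
    dirD (ED d j) (fun z => g (Lsc d lam h z)) =
      fun z => cst d lam h j • dirD (ED d j) g (Lsc d lam h z) := by
  ext z
  unfold dirD
  have h1 : HasFDerivAt g (fderiv ℝ g (Lsc d lam h z)) (Lsc d lam h z) :=
    (hg.differentiable (by simp)).differentiableAt.hasFDerivAt
  have h2 := h1.comp z (Lsc d lam h).hasFDerivAt
  have h3 : fderiv ℝ (fun z => g (Lsc d lam h z)) z = _ := h2.fderiv
  rw [h3, ContinuousLinearMap.comp_apply, Lsc_ED, map_smul]

theorem wordD_Lsc {g : Q d × Q d → ℂ} (hg : Sm g) (lam h : ℝ)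
    (w : List (Option (Fin d) ⊕ Option (Fin d))) :
    Sm (wordD w g) ∧ wordD w (fun z => g (Lsc d lam h z)) =
      fun z => (w.map (cst d lam h)).prod • wordD w g (Lsc d lam h z) := by
  induction w with
  | nil => exact ⟨hg, by simp [wordD]⟩
  | cons j w ih =>
    refine ⟨ih.1.dirD _, ?_⟩
    change dirD (ED d j) (wordD w _) = fun z => _ • dirD (ED d j) (wordD w g) (Lsc d lam h z)
    rw [ih.2]
    have := dirD_Lsc ih.1 lam h j
    ext z
    have h2 := congrFun this z
    rw [List.map_cons, List.prod_cons, mul_comm, mul_smul, ← h2]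
    unfold dirD
    have hd : DifferentiableAt ℝ (fun z => wordD w g (Lsc d lam h z)) z :=
      ((ih.1.comp (Lsc d lam h).contDiff).differentiable (by simp)).differentiableAt
    rw [fderiv_fun_const_smul hd]
    rfl

theorem cst_prod {lam h : ℝ} (hl : 0 < lam) (w : List (Option (Fin d) ⊕ Option (Fin d))) :
    (w.map (cst d lam h)).prod =
      lam ^ (-(degA (cntA w).1 : ℝ) + (degA (cntA w).2 : ℝ)) * h ^ deg (cntA w).2 := by
  induction w with
  | nil => simp [cntA, degA, deg]
  | cons j w ih =>
    rw [List.map_cons, List.prod_cons, ih]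
    rcases j with (_ | i) | (_ | i)
    · change _ = lam ^ (-(degA ((cntA w).1 + uIdx d none) : ℝ) + (degA (cntA w).2 : ℝ)) *
        h ^ deg (cntA w).2
      rw [degA_add]; simp [cst, degA, uIdx]
    · change _ = lam ^ (-(degA ((cntA w).1 + uIdx d (some i)) : ℝ) + (degA (cntA w).2 : ℝ)) *
        h ^ deg (cntA w).2
      rw [degA_add]
      have : degA (uIdx d (some i)) = 1 := by simp [degA, uIdx]
      rw [this]
      have e : (-((degA (cntA w).1 + 1 : ℕ) : ℝ) + (degA (cntA w).2 : ℝ)) =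
        -1 + (-(degA (cntA w).1 : ℝ) + (degA (cntA w).2 : ℝ)) := by push_cast; ring
      rw [e, Real.rpow_add hl (-1), Real.rpow_neg_one]
      simp only [cst]; ring
    · change _ = lam ^ (-(degA (cntA w).1 : ℝ) + (degA ((cntA w).2 + uIdx d none) : ℝ)) *
        h ^ deg ((cntA w).2 + uIdx d none)
      rw [degA_add, deg_add, deg_u]
      have : degA (uIdx d none) = 0 := by simp [degA, uIdx]
      rw [this, add_zero, pow_succ]; simp only [cst]; ring
    · change _ = lam ^ (-(degA (cntA w).1 : ℝ) + (degA ((cntA w).2 + uIdx d (some i)) : ℝ)) *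
        h ^ deg ((cntA w).2 + uIdx d (some i))
      rw [degA_add, deg_add, deg_u]
      have : degA (uIdx d (some i)) = 1 := by simp [degA, uIdx]
      rw [this]
      have e : (-(degA (cntA w).1 : ℝ) + ((degA (cntA w).2 + 1 : ℕ) : ℝ)) =
        1 + (-(degA (cntA w).1 : ℝ) + (degA (cntA w).2 : ℝ)) := by push_cast; ring
      rw [e, Real.rpow_add hl 1, Real.rpow_one, pow_succ]
      simp only [cst]; ring
end Words

section Cut
theorem Bd.mul_loc {E : Type*} [NormedAddCommGroup E] [NormedSpace ℝ E]
    {n : ℕ} {f g : E → ℂ} {A B : ℝ} (hfs : Sm f) (hgs : Sm g)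
    (hf : Bd n f A) (hB : 0 ≤ B) (hg : ∀ i ≤ n, ∀ z ∈ tsupport f, ‖iteratedFDeriv ℝ i g z‖ ≤ B) :
    Bd n (fun x => f x * g x) (2 ^ n * A * B) := by
  intro i hi z
  have hA := hf.nonneg
  refine (norm_iteratedFDeriv_mul_le hfs hgs z (n := i) (by exact_mod_cast le_top)).trans ?_
  calc _ ≤ ∑ k ∈ Finset.range (i + 1), (i.choose k : ℝ) * A * B := by
        apply Finset.sum_le_sum
        intro k hk
        have hk' : k ≤ i := by simpa [Nat.lt_succ_iff] using hk
        by_cases hz : z ∈ tsupport f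
        · gcongr
          · exact hf k (hk'.trans hi) z
          · exact hg (i - k) ((Nat.sub_le _ _).trans hi) z hz
        · have h0 : iteratedFDeriv ℝ k f z = 0 := by
            by_contra h
            exact hz (support_iteratedFDeriv_subset k h)
          rw [h0, norm_zero]
          simp only [mul_zero, zero_mul]
          positivity
    _ = 2 ^ i * A * B := by
        rw [← Finset.sum_mul, ← Finset.sum_mul]
        congr 2
        exact_mod_cast Nat.sum_range_choose i
    _ ≤ _ := by
        gcongr
        norm_num

theorem exists_bump (E : Type*) [NormedAddCommGroup E] [InnerProductSpace ℝ E]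
    [FiniteDimensional ℝ E] :
    ∃ c : E → ℂ, Sm c ∧ HasCompactSupport c ∧ (∀ x, ‖x‖ ≤ 1 → c x = 1) ∧
      (∀ x, c x ≠ 0 → ‖x‖ ≤ 2) ∧ ∀ x, ‖c x‖ ≤ 1 := by
  let b : ContDiffBump (0 : E) := ⟨1, 2, by norm_num, by norm_num⟩
  have hs : ∀ x, ((b x : ℝ) : ℂ) ≠ 0 → ‖x‖ ≤ 2 := by
    intro x hx
    have : x ∈ Function.support b := by
      intro h; apply hx; simp [h]
    rw [b.support_eq] at this
    simpa using (mem_ball_zero_iff.1 this).le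
  refine ⟨fun x => ((b x : ℝ) : ℂ), Complex.ofRealCLM.contDiff.comp b.contDiff, ?_, ?_, hs, ?_⟩
  · refine HasCompactSupport.of_support_subset_isCompact (isCompact_closedBall (0:E) 2) ?_
    intro x hx
    simpa using hs x hx
  · intro x hx
    have := b.one_of_mem_closedBall (x := x) (by simpa using hx)
    simp [this]
  · intro x
    rw [Complex.norm_real, Real.norm_of_nonneg b.nonneg]
    exact b.le_one

variable {V : Type*} [NormedAddCommGroup V] [InnerProductSpace ℝ V] [FiniteDimensional ℝ V]
  [MeasurableSpace V] [BorelSpace V]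

/-- truncation of the symbol -/
def trunc (th : ℝ → ℂ) (c : V → ℂ) (e : V) (s ε : ℝ) (z : V × V) : ℂ :=
  th (inner ℝ e z.1 + (-s)) * (c (ε • z.1) * c (ε • z.2))

theorem trunc_props {th : ℝ → ℂ} {c : V → ℂ} (hth : Sm th) (hc : Sm c)
    (hths : ∀ x, th x ≠ 0 → ‖x‖ ≤ 2) (hcs : ∀ x, c x ≠ 0 → ‖x‖ ≤ 2)
    {n : ℕ} {A A' : ℝ} (hA : Bd n th A) (hA' : Bd n c A')
    {e : V} (he : ‖e‖ ≤ 1) (s : ℝ) {ε : ℝ} (h0 : 0 < ε) (h1 : ε ≤ 1) :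
    CcV (trunc th c e s ε) ∧ Bd n (trunc th c e s ε) (2 ^ n * A * (2 ^ n * A' * A')) ∧
      tsupport (trunc th c e s ε) ⊆ {z | |inner ℝ e z.1 - s| ≤ 2} := by
  have hpos := h0.le
  let L : V × V →L[ℝ] ℝ := (innerSL ℝ e).comp (ContinuousLinearMap.fst ℝ V V)
  let L1 : V × V →L[ℝ] V := ε • ContinuousLinearMap.fst ℝ V V
  let L2 : V × V →L[ℝ] V := ε • ContinuousLinearMap.snd ℝ V V
  have hL : ‖L‖ ≤ 1 := by
    refine ContinuousLinearMap.opNorm_le_bound _ zero_le_one fun z => ?_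
    have : ‖inner ℝ e z.1‖ ≤ ‖e‖ * ‖z.1‖ := norm_inner_le_norm _ _
    have h2 := norm_fst_le z
    calc _ ≤ ‖e‖ * ‖z.1‖ := this
      _ ≤ 1 * ‖z‖ := by gcongr
  have hL1 : ‖L1‖ ≤ 1 := by
    refine ContinuousLinearMap.opNorm_le_bound _ zero_le_one fun z => ?_
    change ‖ε • z.1‖ ≤ _
    rw [norm_smul, Real.norm_of_nonneg hpos]
    have h2 := norm_fst_le z
    gcongr
  have hL2 : ‖L2‖ ≤ 1 := by
    refine ContinuousLinearMap.opNorm_le_bound _ zero_le_one fun z => ?_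
    change ‖ε • z.2‖ ≤ _
    rw [norm_smul, Real.norm_of_nonneg hpos]
    have h2 := norm_snd_le z
    gcongr
  have hth' : Sm (fun x => th (x + (-s))) := hth.comp (by fun_prop)
  have hthz : Sm (fun z => th (L z + (-s))) := hth'.comp L.contDiff
  have hc1 : Sm (fun z => c (L1 z)) := hc.comp L1.contDiff
  have hc2 : Sm (fun z => c (L2 z)) := hc.comp L2.contDiff
  have b1 : Bd n (fun z => th (L z + (-s))) A := (hA.translate (-s)).comp_linear hth' L hL
  have b2 := hA'.comp_linear hc L1 hL1
  have b3 := hA'.comp_linear hc L2 hL2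
  have key := Bd.mul hthz (hc1.mul hc2) b1 (Bd.mul hc1 hc2 b2 b3)
  refine ⟨⟨hthz.mul (hc1.mul hc2), ?_⟩, key, ?_⟩
  · refine HasCompactSupport.of_support_subset_isCompact
      ((isCompact_closedBall (0:V) (2/ε)).prod (isCompact_closedBall (0:V) (2/ε))) ?_
    intro z hz
    have g1 : c (ε • z.1) ≠ 0 := by
      intro h; apply hz; simp [trunc, h]
    have g2 : c (ε • z.2) ≠ 0 := by
      intro h; apply hz; simp [trunc, h]
    have g1 := hcs _ g1
    have g2 := hcs _ g2
    rw [norm_smul, Real.norm_of_nonneg hpos] at g1 g2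
    constructor
    · rw [mem_closedBall_zero_iff, le_div_iff₀ h0]; linarith
    · rw [mem_closedBall_zero_iff, le_div_iff₀ h0]; linarith
  · refine closure_minimal ?_ (isClosed_le (by fun_prop) (by fun_prop))
    intro z hz
    have g1 : th (inner ℝ e z.1 + (-s)) ≠ 0 := by
      intro h; apply hz; simp [trunc, h]
    simpa [sub_eq_add_neg] using hths _ g1

theorem op_bound2 (V : Type*) [NormedAddCommGroup V] [InnerProductSpace ℝ V]
    [FiniteDimensional ℝ V] [MeasurableSpace V] [BorelSpace V] (M : ℕ) :
    ∃ C > 0, ∃ n : ℕ, ∀ t ∈ Set.Icc (0:ℝ) 1, ∀ (a : V × V → ℂ) (S : ℝ), Sm a → 0 ≤ S →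
    ∀ (e : V) (α β : ℝ), ‖e‖ ≤ 1 →
    (∀ i ≤ n, ∀ z : V × V, |inner ℝ e z.1 - (t * α + (1 - t) * β)| ≤ 2 →
      ‖iteratedFDeriv ℝ i a z‖ ≤ S) →
    ∀ v, CcV v → (∀ y, v y ≠ 0 → |inner ℝ e y - β| ≤ 1) →
    ∀ (ζ : V → ℝ) (B : ℝ), Continuous ζ → 0 ≤ B → (∀ x, |ζ x| ≤ B) →
      (∀ x, ζ x ≠ 0 → |inner ℝ e x - α| ≤ 1) →
    ∫⁻ x, ‖(ζ x : ℂ) * TT t a v x‖ₑ ^ 2 ≤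
      ENNReal.ofReal ((B * (C * S * ((1 + |α - β|) ^ M)⁻¹ * √(n2 v))) ^ 2) := by
  obtain ⟨C, hC, n, h⟩ := op_bound V M
  obtain ⟨th, th1, th2, th3, th4, th5⟩ := exists_bump ℝ
  obtain ⟨c, c1, c2, c3, c4, c5⟩ := exists_bump V
  obtain ⟨A, hA0, hA⟩ := Bd.exists_of_compact th1 th2 n
  obtain ⟨A', hA'0, hA'⟩ := Bd.exists_of_compact c1 c2 n
  set K : ℝ := 2 ^ n * (2 ^ n * A * (2 ^ n * A' * A')) with hK
  have hK0 : 0 < K := by positivity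
  refine ⟨C * K, by positivity, n, ?_⟩
  intro t ht a S ha hS e α β he haS v hv hvs ζ B hζ hB hζB hζs
  set s := t * α + (1 - t) * β with hs
  let ε : ℕ → ℝ := fun k => 1 / ((k:ℝ) + 1)
  have ε0 : ∀ k, 0 < ε k := fun k => by positivity
  have ε1 : ∀ k, ε k ≤ 1 := fun k => by
    simp only [ε]; rw [div_le_one (by positivity)]; linarith [(Nat.cast_nonneg k : (0:ℝ) ≤ k)]
  let b : ℕ → V × V → ℂ := fun k z => trunc th c e s (ε k) z * a z
  have tp := fun k => trunc_props th1 c1 th4 c4 hA hA' he s (ε0 k) (ε1 k)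
  have hb : ∀ k, CcV (b k) := fun k => ⟨(tp k).1.1.mul ha, (tp k).1.2.mul_right⟩
  have hbB : ∀ k, Bd n (b k) (K * S) := fun k =>
    Bd.mul_loc (tp k).1.1 ha (tp k).2.1 hS fun i hi z hz => haS i hi z ((tp k).2.2 hz)
  have hbound := fun k => h t ht (b k) (K * S) (hb k) (hbB k) e α β he v hv hvs ζ B hζ hB hζB hζs
  refine fatou_le (F := fun k x => ‖(ζ x : ℂ) * TT t (b k) v x‖ₑ ^ 2) ?_ ?_ ?_
  · intro k
    have := TT_continuous (t := t) (hb k) hv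
    have h2 : Continuous (fun x => (ζ x : ℂ) * TT t (b k) v x) := by fun_prop
    exact (h2.measurable.enorm).pow_const 2
  · intro x
    by_cases hz : ζ x = 0
    · simp [hz]
    set I : V → ℂ := fun ξ => ∫ y, a (t • x + (1 - t) • y, ξ) * ee (inner ℝ ξ (x - y)) * v y with hI
    by_cases hint : Integrable I
    swap
    · have : TT t a v x = 0 := integral_undef hint
      simp [this]
    obtain ⟨R, hR⟩ := hv.2.isCompact.isBounded.exists_norm_le
    have hRv : ∀ y, v y ≠ 0 → ‖y‖ ≤ R := fun y hy => hR y (subset_tsupport v hy)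
    have e1 : ∀ᶠ k in Filter.atTop, ∫ ξ, c (ε k • ξ) * I ξ = TT t (b k) v x := by
      obtain ⟨k0, hk0⟩ := exists_nat_ge (‖x‖ + R)
      filter_upwards [Filter.eventually_ge_atTop k0] with k hk
      unfold TT
      congr 1; ext ξ
      rw [hI]
      simp only
      rw [← integral_const_mul]
      congr 1; ext y
      by_cases hy : v y = 0
      · simp [hy]
      have f1 : th (inner ℝ e (t • x + (1 - t) • y) + (-s)) = 1 := by
        apply th3
        have g1 := hζs x hz
        have g2 := hvs y hy
        rw [inner_add_right, inner_smul_right, inner_smul_right, Real.norm_eq_abs]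
        have : t * inner ℝ e x + (1 - t) * inner ℝ e y + (-s) =
          t * (inner ℝ e x - α) + (1 - t) * (inner ℝ e y - β) := by rw [hs]; ring
        rw [this]
        have t0 := ht.1
        have t1 : 0 ≤ 1 - t := by linarith [ht.2]
        calc _ ≤ |t * (inner ℝ e x - α)| + |(1 - t) * (inner ℝ e y - β)| := abs_add_le _ _
          _ = t * |inner ℝ e x - α| + (1 - t) * |inner ℝ e y - β| := by
            rw [abs_mul, abs_mul, abs_of_nonneg t0, abs_of_nonneg t1]
          _ ≤ t * 1 + (1 - t) * 1 := by gcongr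
          _ = 1 := by ring
      have f2 : c (ε k • (t • x + (1 - t) • y)) = 1 := by
        apply c3
        have t0 := ht.1
        have t1 : 0 ≤ 1 - t := by linarith [ht.2]
        have g1 : ‖t • x + (1 - t) • y‖ ≤ k + 1 := by
          calc _ ≤ ‖t • x‖ + ‖(1 - t) • y‖ := norm_add_le _ _
            _ = t * ‖x‖ + (1 - t) * ‖y‖ := by
              rw [norm_smul, norm_smul, Real.norm_of_nonneg t0, Real.norm_of_nonneg t1]
            _ ≤ 1 * ‖x‖ + 1 * R := by
              gcongr
              · exact ht.2
              · linarith
              · exact hRv y hy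
            _ ≤ k + 1 := by
              have : (k0 : ℝ) ≤ k := by exact_mod_cast hk
              linarith
        rw [norm_smul, Real.norm_of_nonneg (ε0 k).le]
        simp only [ε]
        rw [one_div_mul_eq_div, div_le_one (by positivity)]
        exact g1
      simp only [b, trunc, f1, f2]
      ring
    have e2 : Filter.Tendsto (fun k => ∫ ξ, c (ε k • ξ) * I ξ) Filter.atTop (nhds (∫ ξ, I ξ)) := by
      refine tendsto_integral_of_dominated_convergence (fun ξ => ‖I ξ‖) ?_ hint.norm ?_ ?_
      · intro k
        have : Continuous (fun ξ => c (ε k • ξ)) := c1.continuous.comp (by fun_prop)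
        exact this.aestronglyMeasurable.mul hint.1
      · intro k
        refine Filter.Eventually.of_forall fun ξ => ?_
        rw [norm_mul]
        exact mul_le_of_le_one_left (norm_nonneg _) (c5 _)
      · refine Filter.Eventually.of_forall fun ξ => ?_
        have g1 : Filter.Tendsto ε Filter.atTop (nhds 0) := tendsto_one_div_add_atTop_nhds_zero_nat
        have g2 : Filter.Tendsto (fun k => c (ε k • ξ)) Filter.atTop (nhds (c ((0:ℝ) • ξ))) :=
          (c1.continuous.tendsto _).comp (g1.smul_const ξ)
        rw [zero_smul, c3 0 (by simp)] at g2
        simpa using g2.mul_const (I ξ)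
    have e3 : Filter.Tendsto (fun k => TT t (b k) v x) Filter.atTop (nhds (TT t a v x)) :=
      e2.congr' e1
    have e4 : Filter.Tendsto (fun k => ‖(ζ x : ℂ) * TT t (b k) v x‖ₑ ^ 2) Filter.atTop
        (nhds (‖(ζ x : ℂ) * TT t a v x‖ₑ ^ 2)) := by
      have := (e3.const_mul (ζ x : ℂ)).enorm
      exact ((ENNReal.continuous_pow 2).tendsto _).comp this
    exact e4.liminf_eq.ge
  · intro k
    refine (hbound k).trans_eq ?_
    congr 3
    ring
end Cut

section Symb
variable {d : ℕ}

theorem brF_ge (f : ℝ → ℝ) (x : Q d × Q d) : 1 ≤ brF f x := by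
  unfold brF
  rw [Real.one_le_sqrt]
  have : 0 ≤ ∑ i, (x.2.2 i / f x.1.1) ^ 2 := Finset.sum_nonneg fun _ _ => sq_nonneg _
  nlinarith [sq_nonneg x.2.1]

theorem mem_idxSet {N : ℕ} {α : MIdx d} (h : deg α ≤ N) : α ∈ idxSet d N := by
  unfold idxSet
  rw [Finset.mem_filter, Finset.mem_product, Fintype.mem_piFinset]
  refine ⟨⟨?_, fun i => ?_⟩, h⟩
  · rw [Finset.mem_range]; unfold deg at h; omega
  · rw [Finset.mem_range]
    have : α.2 i ≤ ∑ i, α.2 i := Finset.single_le_sum (f := α.2) (fun _ _ => Nat.zero_le _) (by simp)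
    unfold deg at h; omega

theorem term_nonneg {f : ℝ → ℝ} (hf : ∀ r, 1 ≤ f r) (α β : MIdx d) (a : Q d × Q d → ℂ)
    (x : Q d × Q d) :
    0 ≤ f x.1.1 ^ (-(degA α : ℝ) + (degA β : ℝ)) * brF f x ^ (-(0:ℝ) + (deg β : ℝ)) *
          ‖mderiv2 α β a x‖ := by
  have h1 : 0 < f x.1.1 := lt_of_lt_of_le one_pos (hf _)
  have h2 : 0 < brF f x := lt_of_lt_of_le one_pos (brF_ge f x)
  positivity

theorem symNorm_nonneg {f : ℝ → ℝ} (hf : ∀ r, 1 ≤ f r) (N : ℕ) (a : Q d × Q d → ℂ) :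
    0 ≤ symNorm f 0 N a := by
  unfold symNorm
  refine Finset.sum_nonneg fun α _ => Finset.sum_nonneg fun β _ => ?_
  split_ifs
  · exact Real.iSup_nonneg fun x => term_nonneg hf α β a x
  · exact le_rfl

theorem symNorm_ge {f : ℝ → ℝ} (hf : ∀ r, 1 ≤ f r) {N : ℕ} {a : Q d × Q d → ℂ}
    (ha : IsSymbol f 0 a) {α β : MIdx d} (h : deg α + deg β ≤ N) (x : Q d × Q d) :
    f x.1.1 ^ (-(degA α : ℝ) + (degA β : ℝ)) * ‖mderiv2 α β a x‖ ≤ symNorm f 0 N a := by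
  have h1 : ∀ x : Q d × Q d, 0 < f x.1.1 := fun x => lt_of_lt_of_le one_pos (hf _)
  have h2 : ∀ x : Q d × Q d, 0 < brF f x := fun x => lt_of_lt_of_le one_pos (brF_ge f x)
  have hbdd : BddAbove (Set.range fun x : Q d × Q d =>
      f x.1.1 ^ (-(degA α : ℝ) + (degA β : ℝ)) * brF f x ^ (-(0:ℝ) + (deg β : ℝ)) *
          ‖mderiv2 α β a x‖) := by
    obtain ⟨C, hC⟩ := ha.2 α β
    refine ⟨C, ?_⟩
    rintro _ ⟨x, rfl⟩
    have p1 := h1 x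
    have p2 := h2 x
    calc _ ≤ f x.1.1 ^ (-(degA α : ℝ) + (degA β : ℝ)) * brF f x ^ (-(0:ℝ) + (deg β : ℝ)) *
          (C * f x.1.1 ^ ((degA α : ℝ) - (degA β : ℝ)) * brF f x ^ ((0:ℝ) - (deg β : ℝ))) := by
            exact mul_le_mul_of_nonneg_left (hC x) (by positivity)
      _ = C * (f x.1.1 ^ (-(degA α : ℝ) + (degA β : ℝ)) * f x.1.1 ^ ((degA α : ℝ) - (degA β : ℝ))) *
          (brF f x ^ (-(0:ℝ) + (deg β : ℝ)) * brF f x ^ ((0:ℝ) - (deg β : ℝ))) := by ring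
      _ = C := by
        rw [← Real.rpow_add p1, ← Real.rpow_add p2]
        simp
  have s1 : f x.1.1 ^ (-(degA α : ℝ) + (degA β : ℝ)) * ‖mderiv2 α β a x‖ ≤
      f x.1.1 ^ (-(degA α : ℝ) + (degA β : ℝ)) * brF f x ^ (-(0:ℝ) + (deg β : ℝ)) *
          ‖mderiv2 α β a x‖ := by
    have p1 := h1 x
    have : 1 ≤ brF f x ^ (-(0:ℝ) + (deg β : ℝ)) :=
      Real.one_le_rpow (brF_ge f x) (by simp)
    gcongr
    exact le_mul_of_one_le_right (by positivity) this
  refine s1.trans ((le_ciSup hbdd x).trans ?_)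
  unfold symNorm
  have nn : ∀ α β : MIdx d, 0 ≤ if deg α + deg β ≤ N then
      ⨆ x : Q d × Q d,
        f x.1.1 ^ (-(degA α : ℝ) + (degA β : ℝ)) * brF f x ^ (-(0:ℝ) + (deg β : ℝ)) *
          ‖mderiv2 α β a x‖
    else 0 := by
    intro α β
    split_ifs
    · exact Real.iSup_nonneg fun x => term_nonneg hf α β a x
    · exact le_rfl
  refine le_trans ?_ (Finset.single_le_sum (f := fun α => ∑ β ∈ idxSet d N, if deg α + deg β ≤ N then
      ⨆ x : Q d × Q d,
        f x.1.1 ^ (-(degA α : ℝ) + (degA β : ℝ)) * brF f x ^ (-(0:ℝ) + (deg β : ℝ)) *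
          ‖mderiv2 α β a x‖
    else 0) (fun α _ => Finset.sum_nonneg fun β _ => nn α β) (mem_idxSet (α := α) (by omega)))
  refine le_trans ?_ (Finset.single_le_sum (fun β _ => nn α β) (mem_idxSet (α := β) (by omega)))
  rw [if_pos h]

theorem f_ratio {f : ℝ → ℝ} (hf : GoodF f) : ∃ L : ℝ, 0 ≤ L ∧ ∀ (n : ℕ) (x r s : ℝ), |x| ≤ n →
    |r - s| ≤ 2 → f s ^ x ≤ Real.exp (n * L) * f r ^ x := by
  obtain ⟨C, hC⟩ := hf.2.2 1 le_rfl
  have hC0 : 0 ≤ C := (abs_nonneg _).trans (hC 0)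
  have pos : ∀ r, 0 < f r := fun r => lt_of_lt_of_le one_pos (hf.2.1 r)
  refine ⟨2 * C, by positivity, fun n x r s hx hrs => ?_⟩
  have hd : Differentiable ℝ (fun s => Real.log (f s)) := fun r =>
    ((hf.1.differentiable (by simp)).differentiableAt).log (pos r).ne'
  have hlip : |Real.log (f s) - Real.log (f r)| ≤ C * |s - r| := by
    have := Convex.norm_image_sub_le_of_norm_deriv_le (f := fun s => Real.log (f s)) (C := C)
      (s := Set.univ) (x := r) (y := s) (fun x _ => hd x) (fun x _ => by
        have := hC x
        rwa [iteratedDeriv_one] at this) convex_univ trivial trivial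
    simpa using this
  rw [Real.rpow_def_of_pos (pos s), Real.rpow_def_of_pos (pos r), ← Real.exp_add]
  apply Real.exp_le_exp.2
  have h1 : (Real.log (f s) - Real.log (f r)) * x ≤ (2 * C) * n := by
    calc _ ≤ |(Real.log (f s) - Real.log (f r)) * x| := le_abs_self _
      _ = |Real.log (f s) - Real.log (f r)| * |x| := abs_mul _ _
      _ ≤ (C * |s - r|) * n := by gcongr
      _ ≤ (C * 2) * n := by gcongr; rwa [abs_sub_comm]
      _ = _ := by ring
  linarith

theorem degA_le (α : MIdx d) : degA α ≤ deg α := by unfold degA deg; omega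

theorem sym_bound {f : ℝ → ℝ} (hf : GoodF f) (d n : ℕ) : ∃ K > 0, ∀ a : Q d × Q d → ℂ,
    IsSymbol f 0 a → ∀ h : ℝ, 0 < h → h ≤ 2 * Real.pi → ∀ s : ℝ, ∀ i ≤ n, ∀ z : Q d × Q d,
    |z.1.1 - s| ≤ 2 →
    ‖iteratedFDeriv ℝ i (fun z => a (Lsc d (f s) h z)) z‖ ≤ K * symNorm f 0 n a := by
  obtain ⟨L, hL, hr⟩ := f_ratio hf
  set cc : ℝ := (Fintype.card (Option (Fin d) ⊕ Option (Fin d)) : ℝ) with hcc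
  have hcc1 : 1 ≤ cc := by
    rw [hcc]; exact_mod_cast Fintype.card_pos
  have hpi : 1 ≤ 2 * Real.pi := by linarith [Real.pi_gt_three]
  refine ⟨cc ^ n * (Real.exp (n * L) * (2 * Real.pi) ^ n), by positivity, ?_⟩
  intro a ha h h0 h1 s i hi z hz
  have hS := symNorm_nonneg hf.2.1 n a
  have pos : ∀ r, 0 < f r := fun r => lt_of_lt_of_le one_pos (hf.2.1 r)
  have hsm : Sm (fun z => a (Lsc d (f s) h z)) := ha.1.comp (Lsc d (f s) h).contDiff
  refine (words_bound i _ hsm z (Real.exp (n * L) * (2 * Real.pi) ^ n * symNorm f 0 n a) ?_).trans ?_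
  · intro w hw
    rw [(wordD_Lsc ha.1 (f s) h w).2]
    simp only
    rw [norm_smul, cst_prod (pos s), wordD_eq ha.1]
    have hdeg := deg_cnt w
    set α := (cntA w).1
    set β := (cntA w).2
    have q1 : (Lsc d (f s) h z).1.1 = z.1.1 := by
      change 1 * z.1.1 = _; ring
    have q2 := symNorm_ge hf.2.1 ha (α := α) (β := β) (N := n) (by omega) (Lsc d (f s) h z)
    rw [q1] at q2
    have hA := degA_le α
    have hB := degA_le β
    have q3 : |(-(degA α : ℝ) + (degA β : ℝ))| ≤ n := by
      have a1 : (degA α : ℝ) ≤ n := by exact_mod_cast (by omega : degA α ≤ n)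
      have a2 : (degA β : ℝ) ≤ n := by exact_mod_cast (by omega : degA β ≤ n)
      have a3 : (0:ℝ) ≤ degA α := by positivity
      have a4 : (0:ℝ) ≤ degA β := by positivity
      rw [abs_le]; constructor <;> linarith
    have q4 := hr n _ z.1.1 s q3 hz
    have q5 : h ^ deg β ≤ (2 * Real.pi) ^ n :=
      (pow_le_pow_left₀ h0.le h1 _).trans (pow_le_pow_right₀ hpi (by omega))
    have p1 := pos s
    have p2 := pos z.1.1
    rw [Real.norm_of_nonneg (by positivity)]
    calc _ ≤ ((Real.exp (n * L) * f z.1.1 ^ (-(degA α : ℝ) + (degA β : ℝ))) * (2 * Real.pi) ^ n) *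
          ‖mderiv2 α β a (Lsc d (f s) h z)‖ := by gcongr
      _ = Real.exp (n * L) * (2 * Real.pi) ^ n * (f z.1.1 ^ (-(degA α : ℝ) + (degA β : ℝ)) *
          ‖mderiv2 α β a (Lsc d (f s) h z)‖) := by ring
      _ ≤ _ := by gcongr
  · rw [← hcc, mul_assoc (cc ^ n)]
    gcongr
end Symb

section Transfer

/-- Euclidean model -/
abbrev VE (d : ℕ) : Type := EuclideanSpace ℝ (Fin (d + 1))

/-- identification -/
def iot (d : ℕ) : VE d →L[ℝ] Q d :=
  (EuclideanSpace.proj (0 : Fin (d+1))).prod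
    (ContinuousLinearMap.pi fun i : Fin d => EuclideanSpace.proj i.succ)

theorem iot_apply (d : ℕ) (x : VE d) : iot d x = (x 0, fun i => x i.succ) := rfl

theorem iot_norm (d : ℕ) (x : VE d) : ‖iot d x‖ ≤ ‖x‖ := by
  rw [iot_apply, Prod.norm_def]
  refine max_le (PiLp.norm_apply_le x 0) ?_
  exact (pi_norm_le_iff_of_nonneg (norm_nonneg _)).2 fun i => PiLp.norm_apply_le x i.succ

theorem iot_mp (d : ℕ) : MeasurePreserving (iot d) volume volume := by
  have h1 := PiLp.volume_preserving_ofLp (Fin (d+1))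
  have h2 := volume_preserving_piFinSuccAbove (fun _ : Fin (d+1) => ℝ) 0
  have h3 := h2.comp h1
  have e : (iot d : VE d → Q d) =
      (MeasurableEquiv.piFinSuccAbove (fun _ : Fin (d+1) => ℝ) 0) ∘ WithLp.ofLp := by
    funext x
    refine Prod.ext rfl ?_
    funext i
    simp [iot_apply, MeasurableEquiv.piFinSuccAbove, Fin.insertNthEquiv, Fin.tail]
  rw [e]
  exact h3

theorem Asc_map (d : ℕ) {s m : ℝ} (hs : 0 < s) (hm : 0 < m) :
    Measure.map (Asc d s m) volume = ENNReal.ofReal ((s * m ^ d)⁻¹) • volume := by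
  have e : (Asc d s m : Q d → Q d) = Prod.map (fun x : ℝ => s • x) (fun x : Fin d → ℝ => m • x) := by
    ext q <;> simp [Asc_apply]
  rw [e, show (volume : Measure (Q d)) = volume.prod volume from rfl,
    ← Measure.map_prod_map _ _ (by fun_prop) (by fun_prop),
    Measure.map_addHaar_smul _ hs.ne', Measure.map_addHaar_smul _ hm.ne',
    Measure.prod_smul_left, Measure.prod_smul_right, smul_smul, ← ENNReal.ofReal_mul (by positivity)]
  congr 2
  simp only [Module.finrank_self, pow_one, Module.finrank_fintype_fun_eq_card, Fintype.card_fin]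
  rw [abs_of_pos (by positivity), abs_of_pos (by positivity), mul_inv]

/-- scaled identification -/
def JJ (d : ℕ) (s m : ℝ) : VE d →L[ℝ] Q d := (Asc d s m).comp (iot d)

theorem JJ_map (d : ℕ) {s m : ℝ} (hs : 0 < s) (hm : 0 < m) :
    Measure.map (JJ d s m) volume = ENNReal.ofReal ((s * m ^ d)⁻¹) • volume := by
  have : (JJ d s m : VE d → Q d) = Asc d s m ∘ iot d := rfl
  rw [this, ← Measure.map_map (Asc d s m).continuous.measurable (iot d).continuous.measurable,
    (iot_mp d).map_eq, Asc_map d hs hm]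

theorem JJ_inj (d : ℕ) {s m : ℝ} (hs : 0 < s) (hm : 0 < m) : Function.Injective (JJ d s m) := by
  intro x y h
  have h' : ((s * x 0, m • fun i : Fin d => x i.succ) : Q d) = (s * y 0, m • fun i : Fin d => y i.succ) := h
  rw [Prod.mk.injEq] at h'
  ext i
  refine Fin.cases ?_ (fun i => ?_) i
  · exact mul_left_cancel₀ hs.ne' h'.1
  · have := congrFun h'.2 i
    exact mul_left_cancel₀ hm.ne' this

theorem JJ_emb (d : ℕ) {s m : ℝ} (hs : 0 < s) (hm : 0 < m) : MeasurableEmbedding (JJ d s m) :=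
  (JJ d s m).continuous.measurableEmbedding (JJ_inj d hs hm)

theorem JJ_integral (d : ℕ) {s m : ℝ} (hs : 0 < s) (hm : 0 < m) {E : Type*} [NormedAddCommGroup E]
    [NormedSpace ℝ E] (F : Q d → E) :
    ∫ x, F (JJ d s m x) = (s * m ^ d)⁻¹ • ∫ q, F q := by
  rw [← (JJ_emb d hs hm).integral_map, JJ_map d hs hm, integral_smul_measure,
    ENNReal.toReal_ofReal (by positivity)]

theorem JJ_lintegral (d : ℕ) {s m : ℝ} (hs : 0 < s) (hm : 0 < m) (F : Q d → ENNReal) :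
    ∫⁻ x, F (JJ d s m x) = ENNReal.ofReal ((s * m ^ d)⁻¹) * ∫⁻ q, F q := by
  rw [← (JJ_emb d hs hm).lintegral_map, JJ_map d hs hm, lintegral_smul_measure, smul_eq_mul]

theorem JJ_surj_compact (d : ℕ) {s m : ℝ} (hs : 0 < s) (hm : 0 < m) {v : Q d → ℂ}
    (hv : HasCompactSupport v) : HasCompactSupport (fun x => v (JJ d s m x)) := by
  have hk : LinearMap.ker (JJ d s m : VE d →ₗ[ℝ] Q d) = ⊥ :=
    LinearMap.ker_eq_bot.2 (JJ_inj d hs hm)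
  exact hv.comp_isClosedEmbedding (LinearMap.isClosedEmbedding_of_injective hk)

theorem ephase_JJ (d : ℕ) {ℏ lam : ℝ} (hh : 0 < ℏ) (hl : 0 < lam) (ξ v : VE d) :
    ephase ℏ (JJ d (2 * Real.pi * ℏ) (2 * Real.pi * ℏ * lam) ξ) (JJ d 1 lam⁻¹ v) =
      ee (inner ℝ ξ v) := by
  rw [ee_eq]
  unfold ephase
  have e : qdot (JJ d (2 * Real.pi * ℏ) (2 * Real.pi * ℏ * lam) ξ) (JJ d 1 lam⁻¹ v) =
      2 * Real.pi * ℏ * inner ℝ ξ v := by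
    have h1 : (inner ℝ ξ v : ℝ) = ∑ i, ξ i * v i := by
      rw [PiLp.inner_apply]
      refine Finset.sum_congr rfl fun i _ => ?_
      simp [mul_comm]
    rw [h1, Fin.sum_univ_succ]
    change (2 * Real.pi * ℏ * ξ 0) * (1 * v 0) +
      ∑ i : Fin d, (2 * Real.pi * ℏ * lam * ξ i.succ) * (lam⁻¹ * v i.succ) = _
    rw [mul_add, Finset.mul_sum]
    congr 1
    · ring
    · refine Finset.sum_congr rfl fun i _ => ?_
      field_simp
  rw [e]
  congr 1
  have : (ℏ : ℂ) ≠ 0 := by exact_mod_cast hh.ne'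
  push_cast
  field_simp

theorem Op_JJ (d : ℕ) {ℏ lam : ℝ} (hh : 0 < ℏ) (hl : 0 < lam) (t : ℝ) (a : Q d × Q d → ℂ)
    (u : Q d → ℂ) (x : VE d) :
    Op ℏ t a u (JJ d 1 lam⁻¹ x) =
      TT t (fun z : VE d × VE d => a (Lsc d lam (2 * Real.pi * ℏ) (iot d z.1, iot d z.2)))
        (fun y => u (JJ d 1 lam⁻¹ y)) x := by
  have hl' : 0 < lam⁻¹ := by positivity
  have h2 : 0 < 2 * Real.pi * ℏ := by positivity
  have h3 : 0 < 2 * Real.pi * ℏ * lam := by positivity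
  unfold TT Op
  have e : ∀ ξ : VE d, (∫ y : VE d, a (Lsc d lam (2 * Real.pi * ℏ)
      (iot d (t • x + (1 - t) • y), iot d ξ)) * ee (inner ℝ ξ (x - y)) * u (JJ d 1 lam⁻¹ y)) =
      (1 * lam⁻¹ ^ d)⁻¹ • ∫ q' : Q d, a (t • JJ d 1 lam⁻¹ x + (1 - t) • q',
        JJ d (2 * Real.pi * ℏ) (2 * Real.pi * ℏ * lam) ξ) *
        ephase ℏ (JJ d (2 * Real.pi * ℏ) (2 * Real.pi * ℏ * lam) ξ) (JJ d 1 lam⁻¹ x - q') * u q' := by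
    intro ξ
    rw [← JJ_integral d one_pos hl']
    congr 1; ext y
    rw [← map_sub, ephase_JJ d hh hl]
    have : Lsc d lam (2 * Real.pi * ℏ) (iot d (t • x + (1 - t) • y), iot d ξ) =
      (t • JJ d 1 lam⁻¹ x + (1 - t) • JJ d 1 lam⁻¹ y,
        JJ d (2 * Real.pi * ℏ) (2 * Real.pi * ℏ * lam) ξ) := by
      rw [← map_smul, ← map_smul, ← map_add]; rfl
    rw [this]
  simp only [e]
  rw [integral_smul, JJ_integral d h2 h3 (fun p => ∫ q' : Q d, a (t • JJ d 1 lam⁻¹ x + (1 - t) • q',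
        p) * ephase ℏ p (JJ d 1 lam⁻¹ x - q') * u q'), smul_smul]
  congr 1
  rw [one_mul, mul_pow _ lam, inv_pow, inv_inv, pow_succ]
  have hld : lam ^ d ≠ 0 := by positivity
  field_simp

theorem l2norm_le {d : ℕ} {g : Q d → ℂ} {X : ℝ} (hX : 0 ≤ X)
    (h : ∫⁻ q, ‖g q‖ₑ ^ 2 ≤ ENNReal.ofReal (X ^ 2)) : l2norm g ≤ X := by
  have h1 : ∫ q, ‖g q‖ ^ 2 ≤ X ^ 2 := by
    by_cases hi : Integrable (fun q => ‖g q‖ ^ 2)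
    · have := ofReal_integral_eq_lintegral_ofReal hi (Filter.Eventually.of_forall fun q => by positivity)
      have e : ∫⁻ q, ENNReal.ofReal (‖g q‖ ^ 2) = ∫⁻ q, ‖g q‖ₑ ^ 2 := by
        congr 1; ext q
        rw [ENNReal.ofReal_pow (norm_nonneg _), ofReal_norm]
      rw [e] at this
      rw [← this] at h
      exact (ENNReal.ofReal_le_ofReal_iff (by positivity)).1 h
    · rw [integral_undef hi]; positivity
  unfold l2norm
  rw [← Real.sqrt_eq_rpow]
  exact Real.sqrt_le_iff.2 ⟨hX, h1⟩

theorem iter_comp {E G : Type*} [NormedAddCommGroup E] [NormedSpace ℝ E]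
    [NormedAddCommGroup G] [NormedSpace ℝ G] {f : E → ℂ} (hfs : Sm f)
    (L : G →L[ℝ] E) (hL : ‖L‖ ≤ 1) (i : ℕ) (z : G) :
    ‖iteratedFDeriv ℝ i (fun x => f (L x)) z‖ ≤ ‖iteratedFDeriv ℝ i f (L z)‖ := by
  have := L.iteratedFDeriv_comp_right hfs z (i := i) (by exact_mod_cast le_top)
  change ‖iteratedFDeriv ℝ i (f ∘ L) z‖ ≤ _
  rw [this]
  refine (ContinuousMultilinearMap.norm_compContinuousLinearMap_le _ _).trans ?_
  have h1 : ∏ _j : Fin i, ‖L‖ ≤ 1 := Finset.prod_le_one (fun _ _ => norm_nonneg _) (fun _ _ => hL)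
  exact mul_le_of_le_one_right (norm_nonneg _) h1

end Transfer

/-- off-diagonal decay `‖ψ_j Op^t_ℏ(a) ψ_k‖ ≲ ⟨j-k⟩^{-N}`. -/
theorem statement7 (d : ℕ) (f : ℝ → ℝ) (hf : GoodF f)
    (ψ : ℝ → ℝ) (hψs : ContDiff ℝ (⊤ : ℕ∞) ψ) (hψc : HasCompactSupport ψ)
    (hψ0 : ∀ r : ℝ, 0 ≤ ψ r) (hψsupp : tsupport ψ ⊆ Set.Ioo (-1 : ℝ) 1)
    (hψsum : ∀ r : ℝ, ∑' j : ℤ, ψ (r - (j : ℝ)) = 1) (N : ℕ) :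
    ∃ C > (0 : ℝ), ∃ N' : ℕ, ∀ t ∈ Set.Icc (0 : ℝ) 1, ∀ ℏ ∈ Set.Ioc (0 : ℝ) 1,
      ∀ j k : ℤ, ∀ a : Q d × Q d → ℂ, IsSymbol f 0 a → ∀ u : Q d → ℂ, IsCc u →
        l2norm (fun q : Q d => Complex.ofReal (ψ (q.1 - (j : ℝ))) *
            Op ℏ t a (fun q' => Complex.ofReal (ψ (q'.1 - (k : ℝ))) * u q') q)
          ≤ C * symNorm f 0 N' a *
              Real.sqrt (1 + ((j : ℝ) - (k : ℝ)) ^ 2) ^ (-(N : ℝ)) * l2norm u := by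
  obtain ⟨C, hC, n, hmain⟩ := op_bound2 (VE d) N
  obtain ⟨K, hK, hsym⟩ := sym_bound hf d n
  obtain ⟨B0, hB0⟩ := hψc.exists_bound_of_continuous hψs.continuous
  set B : ℝ := |B0| + 1 with hBdef
  have hBpos : 0 < B := by positivity
  have hB : ∀ r, |ψ r| ≤ B := fun r => by
    have := hB0 r
    rw [Real.norm_eq_abs] at this
    linarith [le_abs_self B0]
  have hsup : ∀ r, ψ r ≠ 0 → |r| ≤ 1 := fun r hr => by
    have := hψsupp (subset_tsupport ψ hr)
    rw [abs_le]; exact ⟨this.1.le, this.2.le⟩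
  refine ⟨B * C * K * B, by positivity, n, ?_⟩
  intro t ht ℏ hℏ j k a ha u hu
  have hh := hℏ.1
  set s : ℝ := t * j + (1 - t) * k with hs
  set lam := f s with hlam
  have hl : 0 < lam := lt_of_lt_of_le one_pos (hf.2.1 s)
  have hl' : 0 < lam⁻¹ := by positivity
  have hS := symNorm_nonneg hf.2.1 n a
  set S := symNorm f 0 n a with hSdef
  set c : ℝ := (1 * lam⁻¹ ^ d)⁻¹ with hc
  have hcpos : 0 < c := by positivity
  have hl2 : 0 ≤ l2norm u := by unfold l2norm; positivity
  set D : ℝ := ((1 + |(j:ℝ) - k|) ^ N)⁻¹ with hD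
  have hDpos : 0 < D := by positivity
  have hDle : D ≤ Real.sqrt (1 + ((j : ℝ) - (k : ℝ)) ^ 2) ^ (-(N : ℝ)) := by
    rw [Real.rpow_neg (Real.sqrt_nonneg _), Real.rpow_natCast]
    apply inv_anti₀ (by positivity)
    gcongr
    rw [Real.sqrt_le_iff]
    refine ⟨by positivity, ?_⟩
    have := abs_nonneg ((j:ℝ) - k)
    nlinarith [sq_abs ((j:ℝ) - k)]
  have goal1 : l2norm (fun q : Q d => Complex.ofReal (ψ (q.1 - (j : ℝ))) *
            Op ℏ t a (fun q' => Complex.ofReal (ψ (q'.1 - (k : ℝ))) * u q') q) ≤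
      B * (C * (K * S) * D * (B * l2norm u)) := by
    apply l2norm_le (by positivity)
    set v0 : Q d → ℂ := fun q' => Complex.ofReal (ψ (q'.1 - (k : ℝ))) * u q' with hv0
    set v : VE d → ℂ := fun y => v0 (JJ d 1 lam⁻¹ y) with hv
    have hv0s : Sm v0 := by
      have h1 : ContDiff ℝ (⊤ : ℕ∞) (fun q : Q d => ψ (q.1 - (k:ℝ))) :=
        hψs.comp (contDiff_fst.sub contDiff_const)
      exact (Complex.ofRealCLM.contDiff.comp h1).mul hu.1
    have hv0c : HasCompactSupport v0 := hu.2.mul_left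
    have hvC : CcV v := ⟨hv0s.comp (JJ d 1 lam⁻¹).contDiff, JJ_surj_compact d one_pos hl' hv0c⟩
    have hJ : ∀ y : VE d, (JJ d 1 lam⁻¹ y).1 = y 0 := fun y => one_mul _
    set e : VE d := EuclideanSpace.single 0 1 with he
    have he1 : ‖e‖ ≤ 1 := by simp [he]
    have hin : ∀ y : VE d, inner ℝ e y = y 0 := fun y => by
      rw [he, EuclideanSpace.inner_single_left]; simp
    set a' : VE d × VE d → ℂ :=
      fun z => a (Lsc d lam (2 * Real.pi * ℏ) (iot d z.1, iot d z.2)) with ha'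
    set g : Q d × Q d → ℂ := fun z => a (Lsc d lam (2 * Real.pi * ℏ) z) with hg
    have hgs : Sm g := ha.1.comp (Lsc d lam (2 * Real.pi * ℏ)).contDiff
    let L0 : VE d × VE d →L[ℝ] Q d × Q d := (iot d).prodMap (iot d)
    have hL0 : ‖L0‖ ≤ 1 := by
      refine ContinuousLinearMap.opNorm_le_bound _ zero_le_one fun z => ?_
      rw [one_mul]
      change ‖(iot d z.1, iot d z.2)‖ ≤ _
      rw [Prod.norm_def]
      exact max_le ((iot_norm d _).trans (norm_fst_le z)) ((iot_norm d _).trans (norm_snd_le z))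
    have ha's : Sm a' := hgs.comp L0.contDiff
    have hpi := Real.pi_pos
    have key := hmain t ht a' (K * S) ha's (by positivity) e j k he1 (by
        intro i hi z hz
        rw [hin] at hz
        refine (iter_comp hgs L0 hL0 i z).trans ?_
        exact hsym a ha (2 * Real.pi * ℏ) (by positivity)
          (mul_le_of_le_one_right (by positivity) hℏ.2) s i hi (L0 z) hz) v hvC (by
        intro y hy
        rw [hin, ← hJ]
        apply hsup
        intro h
        apply hy
        simp [hv, hv0, h]) (fun x => ψ (x 0 - j)) B (by
        have := hψs.continuous
        fun_prop) hBpos.le (fun x => hB _) (by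
        intro x hx
        rw [hin]
        exact hsup _ hx)
    have e1 : ∀ x : VE d, (Complex.ofReal (ψ (x 0 - j)) * TT t a' v x) =
        (fun q : Q d => Complex.ofReal (ψ (q.1 - (j : ℝ))) * Op ℏ t a v0 q) (JJ d 1 lam⁻¹ x) := by
      intro x
      simp only
      rw [hJ, Op_JJ d hh hl]
    simp only [e1] at key
    rw [JJ_lintegral d one_pos hl' (fun q => ‖Complex.ofReal (ψ (q.1 - (j : ℝ))) * Op ℏ t a v0 q‖ₑ ^ 2),
      ← hc, ← hD] at key
    have hn2 : √(n2 v) ≤ √c * (B * l2norm u) := by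
      have h1 : n2 v = c * ∫ q, ‖v0 q‖ ^ 2 := by
        unfold n2
        exact JJ_integral d one_pos hl' (fun q => ‖v0 q‖ ^ 2)
      have hu2 : Integrable (fun q => ‖u q‖ ^ 2) := by
        have cu := hu.1.continuous
        apply Continuous.integrable_of_hasCompactSupport (by fun_prop)
        refine hu.2.mono ?_
        intro q hq h
        apply hq
        simp [h]
      have h2 : ∫ q, ‖v0 q‖ ^ 2 ≤ B ^ 2 * ∫ q, ‖u q‖ ^ 2 := by
        rw [← integral_const_mul]
        refine integral_mono_of_nonneg (Filter.Eventually.of_forall fun q => by positivity)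
          (hu2.const_mul _) (Filter.Eventually.of_forall fun q => ?_)
        simp only [hv0]
        rw [norm_mul, mul_pow, Complex.norm_real, Real.norm_eq_abs]
        gcongr
        exact hB _
      have h3 : l2norm u = √(∫ q, ‖u q‖ ^ 2) := by
        unfold l2norm; rw [Real.sqrt_eq_rpow]
      rw [h1, Real.sqrt_mul hcpos.le, h3]
      gcongr
      calc _ ≤ √(B ^ 2 * ∫ q, ‖u q‖ ^ 2) := Real.sqrt_le_sqrt h2
        _ = _ := by rw [Real.sqrt_mul (by positivity), Real.sqrt_sq hBpos.le]
    have h4 : (B * (C * (K * S) * D * √(n2 v))) ^ 2 ≤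
        c * (B * (C * (K * S) * D * (B * l2norm u))) ^ 2 := by
      calc _ ≤ (B * (C * (K * S) * D * (√c * (B * l2norm u)))) ^ 2 := by gcongr
        _ = √c ^ 2 * (B * (C * (K * S) * D * (B * l2norm u))) ^ 2 := by ring
        _ = _ := by rw [Real.sq_sqrt hcpos.le]
    have h5 := key.trans (ENNReal.ofReal_le_ofReal h4)
    rw [ENNReal.ofReal_mul hcpos.le] at h5
    exact (ENNReal.mul_le_mul_iff_right (by simpa using hcpos) ENNReal.ofReal_ne_top).1 h5
  refine goal1.trans ?_
  calc B * (C * (K * S) * D * (B * l2norm u)) = B * C * K * B * S * D * l2norm u := by ring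
    _ ≤ _ := by gcongr

end
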